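/- arXiv:2204.05020 — 4 statements merged into one kernel-verified Lean document; each statement's English description precedes it below -/
import Mathlib

section
/- Assume M > 0. Then for every integer k ≥ 0 and every real ν: if the limit ℓ = lim_{λ→M⁺} (λ − M)^ν · L^{(k)}(λ) exists in ℝ ∪ {±∞}, then the limit lim_{λ→M⁺} (λ − M)^ν · F^{(k)}(λ) also exists and equals ℓ/M (with the convention (±∞)/M = ±∞). -/
/-!
Write `u = l - C`, so that `u' = s`, and let `φ` be an antiderivative of `u ^ (-(k + 1))`. The
function `Σ · φ(u)` is Lipschitz and periodic, so its derivative
`c φ(u) + s Σ u ^ (-(k + 1))` has zero mean. Since `s Σ = 1 - c C = 1 - l c + c u`, this says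
`∫ u ^ (-(k + 1)) - l ∫ c u ^ (-(k + 1)) = -∫ c (φ(u) + u ^ (-k))` (`moment_identity`).

The function `φ(u) + u ^ (-k)` is `o(u ^ (-(k + 1)))` as `u → 0⁺` (`prim_bound`), whereas
`∫ u ^ (-(k + 1)) → ∞` as `l → M⁺` because `C` is Lipschitz (`tendsto_mom`). Hence the right-hand
side is negligible (`tendsto_defect`). By differentiation under the integral
(`iteratedDeriv_mom`), the `k`-th derivatives of `L` and `F` are the same constant `(-1) ^ k k!`
times these two moments, so `F⁽ᵏ⁾ / L⁽ᵏ⁾ → 1 / M`. This gives the claim for every power of `l - M`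
and every extended-real limit.
-/

open MeasureTheory Filter Set Topology

/-- The antiderivative of `u ↦ u ^ (-(k + 1))` on `(0, ∞)`: the logarithm for `k = 0`, and
`-u ^ (-k) / k` for positive `k`. -/
noncomputable def prim : ℕ → ℝ → ℝ
  | 0, u => Real.log u
  | (k + 1), u => -((k : ℝ) + 1)⁻¹ * (u ^ (k + 1))⁻¹

lemma hasDerivAt_prim (k : ℕ) {u : ℝ} (hu : 0 < u) :
    HasDerivAt (prim k) ((u ^ (k + 1))⁻¹) u := by
  cases k with
  | zero =>
    have h : HasDerivAt (prim 0) u⁻¹ u := Real.hasDerivAt_log hu.ne'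
    simpa using h
  | succ k =>
    have h := ((hasDerivAt_pow (k + 1) u).inv (pow_pos hu _).ne').const_mul (-((k : ℝ) + 1)⁻¹)
    refine h.congr_deriv ?_
    have : (k : ℝ) + 1 ≠ 0 := by positivity
    push_cast
    field_simp
    ring

/-- Near `0`, `prim k u + u ^ (-k)` is negligible against `u ^ (-(k + 1))`. -/
lemma tendsto_prim (k : ℕ) :
    Tendsto (fun u : ℝ => u ^ (k + 1) * (prim k u + u * (u ^ (k + 1))⁻¹)) (𝓝[>] 0) (𝓝 0) := by
  have hid : Tendsto (fun u : ℝ => u) (𝓝[>] 0) (𝓝 0) := tendsto_nhdsWithin_of_tendsto_nhds tendsto_id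
  cases k with
  | zero =>
    have h1 : Tendsto (fun u : ℝ => u * Real.log u) (𝓝[>] 0) (𝓝 0) := by
      have := (Real.continuous_mul_log.tendsto 0)
      simp only [zero_mul] at this
      exact tendsto_nhdsWithin_of_tendsto_nhds this
    have h2 := h1.add hid
    rw [add_zero] at h2
    refine h2.congr' ?_
    filter_upwards [self_mem_nhdsWithin] with u hu
    have hu : u ≠ 0 := (show (0 : ℝ) < u from hu).ne'
    simp only [prim]
    field_simp
    ring
  | succ k =>
    have h2 := hid.const_mul (1 - ((k : ℝ) + 1)⁻¹)
    rw [mul_zero] at h2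
    refine h2.congr' ?_
    filter_upwards [self_mem_nhdsWithin] with u hu
    have hu : u ≠ 0 := (show (0 : ℝ) < u from hu).ne'
    have : (k : ℝ) + 1 ≠ 0 := by positivity
    simp only [prim]
    field_simp
    ring

lemma prim_bound (k : ℕ) (R ε : ℝ) (hε : 0 < ε) :
    ∃ D : ℝ, 0 ≤ D ∧ ∀ u, 0 < u → u ≤ R →
      |prim k u + u * (u ^ (k + 1))⁻¹| ≤ ε * (u ^ (k + 1))⁻¹ + D := by
  have h := (tendsto_prim k).eventually (Metric.ball_mem_nhds 0 hε)
  rw [eventually_nhdsWithin_iff, Metric.eventually_nhds_iff] at h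
  obtain ⟨δ, hδ, h⟩ := h
  have hc : ContinuousOn (fun u => prim k u + u * (u ^ (k + 1))⁻¹) (Icc δ R) := by
    intro u hu
    have hu0 : 0 < u := hδ.trans_le hu.1
    exact ((hasDerivAt_prim k hu0).continuousAt.add (continuousAt_id.mul
      ((continuousAt_id.pow _).inv₀ (pow_pos hu0 _).ne'))).continuousWithinAt
  obtain ⟨D, hD⟩ := isCompact_Icc.exists_bound_of_continuousOn hc
  refine ⟨max D 0, le_max_right _ _, fun u hu huR => ?_⟩
  have hp : 0 < u ^ (k + 1) := pow_pos hu _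
  by_cases hud : u < δ
  · have h1 := h (y := u) (by simpa [abs_of_pos hu] using hud) hu
    simp only [dist_zero_right, Real.norm_eq_abs, abs_mul, abs_of_pos hp] at h1
    have h2 : |prim k u + u * (u ^ (k + 1))⁻¹| ≤ ε * (u ^ (k + 1))⁻¹ := by
      rw [← div_eq_mul_inv ε, le_div_iff₀ hp]
      linarith
    linarith [le_max_right D 0]
  · have h1 := hD u ⟨not_lt.1 hud, huR⟩
    rw [Real.norm_eq_abs] at h1
    have : 0 ≤ ε * (u ^ (k + 1))⁻¹ := by positivity
    linarith [le_max_left D 0]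

/-- The weighted moment `∫₀ᵀ g (l - C)⁻ⁿ`. -/
noncomputable def mom (C g : ℝ → ℝ) (T : ℝ) (n : ℕ) (l : ℝ) : ℝ :=
  ∫ θ in (0 : ℝ)..T, g θ * ((l - C θ) ^ n)⁻¹

lemma bdd_intervalIntegrable {g : ℝ → ℝ} (hg : Measurable g) {B : ℝ} (hB : ∀ θ, |g θ| ≤ B)
    (a b : ℝ) : IntervalIntegrable g volume a b := by
  refine (intervalIntegrable_const (c := B)).mono_fun hg.aestronglyMeasurable ?_
  refine Eventually.of_forall fun θ => ?_
  simpa using (hB θ).trans (le_abs_self B)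

lemma cont_inv {C : ℝ → ℝ} (hC : Continuous C) {M l : ℝ} (hM : ∀ θ, C θ ≤ M) (hl : M < l) (n : ℕ) :
    Continuous fun θ => ((l - C θ) ^ n)⁻¹ :=
  ((continuous_const.sub hC).pow n).inv₀ fun θ => (pow_pos (sub_pos.2 ((hM θ).trans_lt hl)) n).ne'

lemma mom_integrable {C g : ℝ → ℝ} (hC : Continuous C) (hg : Measurable g) {B : ℝ}
    (hB : ∀ θ, |g θ| ≤ B) {M l : ℝ} (hM : ∀ θ, C θ ≤ M) (hl : M < l) (n : ℕ) (a b : ℝ) :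
    IntervalIntegrable (fun θ => g θ * ((l - C θ) ^ n)⁻¹) volume a b :=
  (bdd_intervalIntegrable hg hB a b).mul_continuousOn (cont_inv hC hM hl n).continuousOn

lemma hasDerivAt_mom {C g : ℝ → ℝ} (hC : Continuous C) (hg : Measurable g) {B : ℝ}
    (hB : ∀ θ, |g θ| ≤ B) {M l : ℝ} (hM : ∀ θ, C θ ≤ M) (hl : M < l) (T : ℝ) (n : ℕ) :
    HasDerivAt (mom C g T n) (-(n : ℝ) * mom C g T (n + 1) l) l := by
  obtain ⟨m, hm1, hm2⟩ := exists_between hl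
  have hpos : ∀ x, m < x → ∀ θ, m - M ≤ x - C θ := fun x hx θ => by linarith [hM θ]
  have hB0 : 0 ≤ B := (abs_nonneg _).trans (hB 0)
  have key := (intervalIntegral.hasDerivAt_integral_of_dominated_loc_of_deriv_le
    (μ := volume) (a := 0) (b := T) (s := Ioi m) (x₀ := l)
    (F := fun x θ => g θ * ((x - C θ) ^ n)⁻¹)
    (F' := fun x θ => -(n : ℝ) * (g θ * ((x - C θ) ^ (n + 1))⁻¹))
    (bound := fun _ => n * (B * ((m - M) ^ (n + 1))⁻¹))
    (Ioi_mem_nhds hm2) ?_ (mom_integrable hC hg hB hM hl n 0 T) ?_ ?_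
    intervalIntegrable_const ?_).2
  · rw [intervalIntegral.integral_const_mul] at key
    exact key
  · refine Eventually.of_forall fun x => Measurable.aestronglyMeasurable ?_
    exact hg.mul ((measurable_const.sub hC.measurable).pow_const n).inv
  · refine Measurable.aestronglyMeasurable ?_
    exact (hg.mul ((measurable_const.sub hC.measurable).pow_const (n + 1)).inv).const_mul _
  · refine Eventually.of_forall fun θ _ x hx => ?_
    have h1 := hpos x hx θ
    have h0 : 0 < m - M := by linarith
    rw [norm_mul, norm_mul, norm_neg, norm_inv, norm_pow, Real.norm_natCast, Real.norm_eq_abs,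
      Real.norm_eq_abs, abs_of_pos (h0.trans_le h1)]
    have h2 : ((x - C θ) ^ (n + 1))⁻¹ ≤ ((m - M) ^ (n + 1))⁻¹ := by gcongr
    have h3 : 0 ≤ ((x - C θ) ^ (n + 1))⁻¹ := by
      have := h0.trans_le h1
      positivity
    exact mul_le_mul_of_nonneg_left (mul_le_mul (hB θ) h2 h3 hB0) (Nat.cast_nonneg n)
  · refine Eventually.of_forall fun θ _ x hx => ?_
    have h0 : 0 < x - C θ := by linarith [hpos x hx θ]
    have h := ((((hasDerivAt_id x).sub_const (C θ)).pow n).inv (pow_pos h0 n).ne').const_mul (g θ)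
    refine h.congr_deriv ?_
    cases n with
    | zero => simp
    | succ n =>
      simp only [id, Nat.add_sub_cancel]
      field_simp
      simp
      ring

lemma iteratedDeriv_mom {C g : ℝ → ℝ} (hC : Continuous C) (hg : Measurable g) {B : ℝ}
    (hB : ∀ θ, |g θ| ≤ B) {M : ℝ} (hM : ∀ θ, C θ ≤ M) (T : ℝ) (G : ℝ → ℝ)
    (hG : ∀ l, M < l → G l = mom C g T 1 l) (k : ℕ) :
    ∀ l, M < l → iteratedDeriv k G l = (-1) ^ k * (k.factorial : ℝ) * mom C g T (k + 1) l := by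
  induction k with
  | zero => intro l hl; simpa using hG l hl
  | succ k ih =>
    intro l hl
    rw [iteratedDeriv_succ]
    have he : iteratedDeriv k G =ᶠ[𝓝 l]
        fun l => (-1) ^ k * (k.factorial : ℝ) * mom C g T (k + 1) l := by
      filter_upwards [Ioi_mem_nhds hl] with x hx using ih x hx
    rw [he.deriv_eq, ((hasDerivAt_mom hC hg hB hM hl T (k + 1)).const_mul _).deriv,
      Nat.factorial_succ]
    push_cast
    ring

/-- The integral over one period of the derivative of `Σ · prim k (l - C)` vanishes; the
Pythagorean identity rewrites that derivative in terms of `c` and `C` only. -/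
lemma moment_identity {C Sg c s : ℝ → ℝ} {T : ℝ}
    (hC_lip : ∃ K : NNReal, LipschitzWith K C) (hSg_lip : ∃ K : NNReal, LipschitzWith K Sg)
    (hC_per : Function.Periodic C T) (hSg_per : Function.Periodic Sg T)
    (hc : Measurable c) {B : ℝ} (hB : ∀ θ, |c θ| ≤ B)
    (hconv : ∀ᵐ θ ∂(volume : Measure ℝ), HasDerivAt C (-(s θ)) θ ∧ HasDerivAt Sg (c θ) θ ∧
      c θ * C θ + s θ * Sg θ = 1)
    {M l : ℝ} (hM : ∀ θ, C θ ≤ M) (hl : M < l) (k : ℕ) :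
    mom C (fun _ => 1) T (k + 1) l - l * mom C c T (k + 1) l =
      -∫ θ in (0 : ℝ)..T, c θ * (prim k (l - C θ) + (l - C θ) * ((l - C θ) ^ (k + 1))⁻¹) := by
  obtain ⟨K, hK⟩ := hC_lip
  obtain ⟨K', hK'⟩ := hSg_lip
  have hC := hK.continuous
  have hu : ∀ θ, l - M ≤ l - C θ := fun θ => by linarith [hM θ]
  have h0 : 0 < l - M := by linarith
  have hprim : LipschitzOnWith (Real.toNNReal (((l - M) ^ (k + 1))⁻¹)) (prim k) (Ici (l - M)) := by
    refine (convex_Ici _).lipschitzOnWith_of_nnnorm_hasDerivWithin_le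
      (f' := fun u => (u ^ (k + 1))⁻¹)
      (fun u hu => (hasDerivAt_prim k (h0.trans_le hu)).hasDerivWithinAt) fun u hu => ?_
    have hu : l - M ≤ u := hu
    rw [← NNReal.coe_le_coe, coe_nnnorm, Real.coe_toNNReal _ (by positivity), norm_inv, norm_pow,
      Real.norm_eq_abs, abs_of_pos (h0.trans_le hu)]
    gcongr
  have hul : LipschitzWith (0 + K) fun θ => l - C θ := (LipschitzWith.const l).sub hK
  have hA : AbsolutelyContinuousOnInterval (fun θ => prim k (l - C θ)) 0 T :=
    (hprim.comp (hul.lipschitzOnWith (s := uIcc 0 T))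
      (fun θ _ => hu θ)).absolutelyContinuousOnInterval
  have hS : AbsolutelyContinuousOnInterval Sg 0 T :=
    (hK'.lipschitzOnWith (s := uIcc 0 T)).absolutelyContinuousOnInterval
  have hFTC := (hS.fun_mul hA).integral_deriv_eq_sub
  have e1 : C T = C 0 := by simpa using hC_per 0
  have e2 : Sg T = Sg 0 := by simpa using hSg_per 0
  rw [e1, e2, sub_self] at hFTC
  have hpc : Continuous fun θ => prim k (l - C θ) + (l - C θ) * ((l - C θ) ^ (k + 1))⁻¹ := by
    refine Continuous.add ?_ ((continuous_const.sub hC).mul (cont_inv hC hM hl (k + 1)))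
    exact continuous_iff_continuousAt.2 fun θ =>
      ContinuousAt.comp (f := fun θ => l - C θ) (g := prim k)
        (hasDerivAt_prim k (h0.trans_le (hu θ))).continuousAt
        (continuous_const.sub hC).continuousAt
  have i1 := mom_integrable hC (g := fun _ => 1) (B := 1) measurable_const (by simp) hM hl
    (k + 1) 0 T
  have i2 := (mom_integrable hC hc hB hM hl (k + 1) 0 T).const_mul l
  have i3 := (bdd_intervalIntegrable hc hB 0 T).mul_continuousOn hpc.continuousOn
  have hae : ∀ᵐ θ ∂(volume : Measure ℝ), deriv (fun θ => Sg θ * prim k (l - C θ)) θ =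
      (1 * ((l - C θ) ^ (k + 1))⁻¹ - l * (c θ * ((l - C θ) ^ (k + 1))⁻¹)) +
        c θ * (prim k (l - C θ) + (l - C θ) * ((l - C θ) ^ (k + 1))⁻¹) := by
    filter_upwards [hconv] with θ ⟨h1, h2, h3⟩
    have h4 : HasDerivAt (fun θ => prim k (l - C θ)) (((l - C θ) ^ (k + 1))⁻¹ * (-(-(s θ)))) θ :=
      HasDerivAt.comp (h := fun θ => l - C θ) θ (hasDerivAt_prim k (h0.trans_le (hu θ)))
        (h1.const_sub l)
    rw [HasDerivAt.deriv (f := fun θ => Sg θ * prim k (l - C θ)) (h2.mul h4)]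
    linear_combination ((l - C θ) ^ (k + 1))⁻¹ * h3
  rw [intervalIntegral.integral_congr_ae (hae.mono fun θ h _ => h),
    intervalIntegral.integral_add (i1.sub i2) i3, intervalIntegral.integral_sub i1 i2,
    intervalIntegral.integral_const_mul l] at hFTC
  simp only [mom]
  linarith

/-- The unweighted moments blow up, because a Lipschitz function stays within
`l - M + K |θ - θ₀|` of `l` near a maximum point `θ₀`. -/
lemma tendsto_mom {C : ℝ → ℝ} {T : ℝ} (hT : 0 < T)
    (hC_lip : ∃ K : NNReal, LipschitzWith K C) (hC_per : Function.Periodic C T)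
    {M : ℝ} (hM : ∀ θ, C θ ≤ M) {θ₀ : ℝ} (hθ₀ : C θ₀ = M) (k : ℕ) :
    Tendsto (mom C (fun _ => 1) T (k + 1)) (𝓝[>] M) atTop := by
  obtain ⟨K₀, hK₀⟩ := hC_lip
  have hC := hK₀.continuous
  set K : ℝ := K₀ + 1 with hK
  have hKpos : 0 < K := by positivity
  have hlip : ∀ x, 0 ≤ x → M - C (x + θ₀) ≤ K * x := fun x hx => by
    have := hK₀.dist_le_mul θ₀ (x + θ₀)
    rw [Real.dist_eq, Real.dist_eq, hθ₀] at this
    have h2 : |θ₀ - (x + θ₀)| = x := by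
      rw [show θ₀ - (x + θ₀) = -x by ring, abs_neg, abs_of_nonneg hx]
    rw [h2] at this
    have := (le_abs_self _).trans this
    nlinarith
  -- `R` bounds `l - M + K x` for `l < M + 1` and `x ≤ T`.
  set R : ℝ := 1 + K * T with hR
  have hRpos : 0 < R := by positivity
  have hlow : ∀ l, M < l → l < M + 1 →
      (R ^ k)⁻¹ * (K⁻¹ * (Real.log (K * T) - Real.log (l - M))) ≤
        mom C (fun _ => 1) T (k + 1) l := by
    intro l hl hl1
    have hd : 0 < l - M := by linarith
    have hper : Function.Periodic (fun θ => (1 : ℝ) * ((l - C θ) ^ (k + 1))⁻¹) T := fun θ => by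
      simp only [hC_per θ]
    have e1 : mom C (fun _ => 1) T (k + 1) l =
        ∫ x in (0 : ℝ)..T, 1 * ((l - C (x + θ₀)) ^ (k + 1))⁻¹ := by
      have h1 := hper.intervalIntegral_add_eq 0 θ₀
      rw [zero_add] at h1
      rw [mom, h1, intervalIntegral.integral_comp_add_right
        (fun θ => (1 : ℝ) * ((l - C θ) ^ (k + 1))⁻¹) θ₀, zero_add, add_comm T]
    have hpos : ∀ x ∈ Icc 0 T, 0 < l - M + K * x := fun x hx => by
      have := mul_nonneg hKpos.le hx.1
      linarith
    have hcont : ContinuousOn (fun x => (l - M + K * x)⁻¹) (uIcc 0 T) := by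
      rw [uIcc_of_le hT.le]
      exact (by fun_prop : Continuous fun x => l - M + K * x).continuousOn.inv₀
        fun x hx => (hpos x hx).ne'
    have e2 : ∫ x in (0 : ℝ)..T, (l - M + K * x)⁻¹ =
        K⁻¹ * (Real.log (l - M + K * T) - Real.log (l - M)) := by
      rw [intervalIntegral.integral_eq_sub_of_hasDerivAt
        (f := fun x => K⁻¹ * Real.log (l - M + K * x)) _ hcont.intervalIntegrable]
      · simp; ring
      · intro x hx
        rw [uIcc_of_le hT.le] at hx
        have h := ((((hasDerivAt_id x).const_mul K).const_add (l - M)).log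
          (hpos x hx).ne').const_mul K⁻¹
        refine h.congr_deriv ?_
        have := (hpos x hx).ne'
        simp only [id]
        field_simp
    have hi : IntervalIntegrable (fun x => 1 * ((l - C (x + θ₀)) ^ (k + 1))⁻¹) volume 0 T :=
      (continuous_const.mul ((cont_inv hC hM hl (k + 1)).comp
        (continuous_id.add continuous_const))).intervalIntegrable _ _
    calc (R ^ k)⁻¹ * (K⁻¹ * (Real.log (K * T) - Real.log (l - M)))
        ≤ (R ^ k)⁻¹ * (K⁻¹ * (Real.log (l - M + K * T) - Real.log (l - M))) := by
          have : 0 < K * T := by positivity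
          gcongr
          linarith
      _ = ∫ x in (0 : ℝ)..T, (R ^ k)⁻¹ * (l - M + K * x)⁻¹ := by
          rw [intervalIntegral.integral_const_mul, e2]
      _ ≤ _ := by
          rw [e1]
          refine intervalIntegral.integral_mono_on hT.le (hcont.intervalIntegrable.const_mul _)
            hi fun x hx => ?_
          have h1 := hlip x hx.1
          have h2 : 0 < l - C (x + θ₀) := by linarith [hM (x + θ₀)]
          have h3 : l - C (x + θ₀) ≤ l - M + K * x := by linarith
          have h4 : l - C (x + θ₀) ≤ R := by
            have := mul_le_mul_of_nonneg_left hx.2 hKpos.le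
            linarith
          have h5 : 0 < l - M + K * x := h2.trans_le h3
          rw [one_mul, pow_succ, mul_inv]
          gcongr
  have hlog : Tendsto (fun l : ℝ => Real.log (l - M)) (𝓝[>] M) atBot := by
    refine Real.tendsto_log_nhdsGT_zero.comp (tendsto_nhdsWithin_iff.2 ⟨?_, ?_⟩)
    · refine tendsto_nhdsWithin_of_tendsto_nhds ?_
      have : Continuous fun l : ℝ => l - M := by fun_prop
      simpa using this.tendsto M
    · filter_upwards [self_mem_nhdsWithin] with l hl
      exact sub_pos.2 (mem_Ioi.1 hl)
  have hbig : Tendsto (fun l : ℝ =>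
      (R ^ k)⁻¹ * (K⁻¹ * (Real.log (K * T) - Real.log (l - M)))) (𝓝[>] M) atTop := by
    refine Tendsto.const_mul_atTop (by positivity) (Tendsto.const_mul_atTop (by positivity) ?_)
    exact tendsto_atTop_add_const_left _ _ (tendsto_neg_atBot_atTop.comp hlog)
  refine tendsto_atTop_mono' _ ?_ hbig
  filter_upwards [self_mem_nhdsWithin,
    mem_nhdsWithin_of_mem_nhds (Iio_mem_nhds (lt_add_one M))] with l h1 h2 using hlow l h1 h2

/-- The defect in `l · mom c ≈ mom 1` is of lower order. -/
lemma tendsto_defect {C Sg c s : ℝ → ℝ} {T : ℝ} (hT : 0 < T)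
    (hC_lip : ∃ K : NNReal, LipschitzWith K C) (hSg_lip : ∃ K : NNReal, LipschitzWith K Sg)
    (hC_per : Function.Periodic C T) (hSg_per : Function.Periodic Sg T)
    (hc : Measurable c) {B : ℝ} (hB : ∀ θ, |c θ| ≤ B)
    (hconv : ∀ᵐ θ ∂(volume : Measure ℝ), HasDerivAt C (-(s θ)) θ ∧ HasDerivAt Sg (c θ) θ ∧
      c θ * C θ + s θ * Sg θ = 1)
    {M : ℝ} (hM : ∀ θ, C θ ≤ M) {θ₀ : ℝ} (hθ₀ : C θ₀ = M) (k : ℕ) :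
    Tendsto (fun l => (mom C (fun _ => 1) T (k + 1) l - l * mom C c T (k + 1) l) /
      mom C (fun _ => 1) T (k + 1) l) (𝓝[>] M) (𝓝 0) := by
  have hC : Continuous C := hC_lip.choose_spec.continuous
  have hI := tendsto_mom hT hC_lip hC_per hM hθ₀ k
  have hB0 : 0 ≤ B := (abs_nonneg _).trans (hB 0)
  obtain ⟨A, hA⟩ := (isCompact_Icc (a := 0) (b := T)).exists_bound_of_continuousOn hC.continuousOn
  rw [Metric.tendsto_nhds]
  intro ε hε
  obtain ⟨η, hη, hη'⟩ : ∃ η, 0 < η ∧ B * η < ε / 2 := by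
    refine ⟨ε / 2 / (B + 1), by positivity, ?_⟩
    rw [mul_div_assoc', div_lt_iff₀ (by positivity)]
    nlinarith
  obtain ⟨D, hD0, hD⟩ := prim_bound k (M + 1 + A) η hη
  filter_upwards [self_mem_nhdsWithin,
    mem_nhdsWithin_of_mem_nhds (Iio_mem_nhds (lt_add_one M)), hI.eventually_gt_atTop 0,
    hI.eventually_gt_atTop (B * D * T / (ε / 2))] with l hl hl1 hIpos hIbig
  have hl : M < l := hl
  have hl1 : l < M + 1 := hl1
  rw [dist_zero_right, Real.norm_eq_abs, abs_div, abs_of_pos hIpos, div_lt_iff₀ hIpos,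
    moment_identity hC_lip hSg_lip hC_per hSg_per hc hB hconv hM hl k, abs_neg]
  have i1 := mom_integrable hC (g := fun _ => 1) (B := 1) measurable_const (by simp) hM hl
    (k + 1) 0 T
  have hint : IntervalIntegrable
      (fun θ => B * η * (1 * ((l - C θ) ^ (k + 1))⁻¹) + B * D) volume 0 T :=
    (i1.const_mul (B * η)).add intervalIntegrable_const
  have hle := intervalIntegral.norm_integral_le_of_norm_le hT.le (μ := volume)
    (f := fun θ => c θ * (prim k (l - C θ) + (l - C θ) * ((l - C θ) ^ (k + 1))⁻¹))
    (g := fun θ => B * η * (1 * ((l - C θ) ^ (k + 1))⁻¹) + B * D)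
    (Eventually.of_forall fun θ hθ => by
      have h1 : 0 < l - C θ := by linarith [hM θ]
      have h2 := neg_abs_le (C θ)
      have h3 : |C θ| ≤ A := hA θ ⟨hθ.1.le, hθ.2⟩
      have h4 := hD (l - C θ) h1 (by linarith)
      rw [norm_mul, Real.norm_eq_abs, Real.norm_eq_abs]
      calc _ ≤ B * (η * ((l - C θ) ^ (k + 1))⁻¹ + D) :=
            mul_le_mul (hB θ) h4 (abs_nonneg _) hB0
        _ = _ := by ring) hint
  rw [Real.norm_eq_abs, intervalIntegral.integral_add (i1.const_mul (B * η))
    intervalIntegrable_const, intervalIntegral.integral_const_mul,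
    intervalIntegral.integral_const, smul_eq_mul, sub_zero] at hle
  change _ ≤ B * η * mom C (fun _ => 1) T (k + 1) l + T * (B * D) at hle
  rw [div_lt_iff₀ (by positivity)] at hIbig
  nlinarith

theorem stmt10
    (S : ℝ) (hS : 0 < S)
    (C Sg c s : ℝ → ℝ)
    (hC_lip : ∃ K : NNReal, LipschitzWith K C)
    (hSg_lip : ∃ K : NNReal, LipschitzWith K Sg)
    (hC_per : Function.Periodic C (2 * S))
    (hSg_per : Function.Periodic Sg (2 * S))
    (hc_meas : Measurable c) (hs_meas : Measurable s)
    (hc_bdd : ∃ B : ℝ, ∀ θ, |c θ| ≤ B) (hs_bdd : ∃ B : ℝ, ∀ θ, |s θ| ≤ B)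
    (hconv : ∀ᵐ θ ∂(volume : Measure ℝ), HasDerivAt C (-(s θ)) θ ∧ HasDerivAt Sg (c θ) θ ∧
      c θ * C θ + s θ * Sg θ = 1)
    (M : ℝ) (hM : IsGreatest (C '' Set.Icc 0 (2 * S)) M)
    (L F : ℝ → ℝ)
    (hL : ∀ l : ℝ, M < l → L l = ∫ θ in (0:ℝ)..(2*S), 1 / (l - C θ))
    (hF : ∀ l : ℝ, M < l → F l = ∫ θ in (0:ℝ)..(2*S), c θ / (l - C θ))
    (hM0 : 0 < M) :
    ∀ k : ℕ, ∀ ν : ℝ, ∀ ℓ : EReal,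
      Tendsto (fun l : ℝ => (((l - M) ^ ν * iteratedDeriv k L l : ℝ) : EReal))
        (𝓝[>] M) (𝓝 ℓ) →
      Tendsto (fun l : ℝ => (((l - M) ^ ν * iteratedDeriv k F l : ℝ) : EReal))
        (𝓝[>] M) (𝓝 (ℓ * ((M⁻¹ : ℝ) : EReal))) := by
  intro k ν ℓ hlim
  have hT : 0 < 2 * S := by linarith
  obtain ⟨⟨θ₀, _, hθ₀⟩, hub⟩ := hM
  have hMle : ∀ θ, C θ ≤ M := fun θ => by
    obtain ⟨y, hy, hy'⟩ := hC_per.exists_mem_Ico₀ hT θ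
    rw [hy']
    exact hub ⟨y, Ico_subset_Icc_self hy, rfl⟩
  obtain ⟨B, hB⟩ := hc_bdd
  have hC : Continuous C := hC_lip.choose_spec.continuous
  have hLk := iteratedDeriv_mom hC (g := fun _ => 1) (B := 1) measurable_const (by simp) hMle
    (2 * S) L (fun l hl => by simp [hL l hl, mom]) k
  have hFk := iteratedDeriv_mom hC hc_meas hB hMle (2 * S) F
    (fun l hl => by simp [hF l hl, mom, div_eq_mul_inv]) k
  have hI := tendsto_mom hT hC_lip hC_per hMle hθ₀ k
  have hdef := tendsto_defect hT hC_lip hSg_lip hC_per hSg_per hc_meas hB hconv hMle hθ₀ k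
  have hid : Tendsto (fun l : ℝ => l⁻¹) (𝓝[>] M) (𝓝 M⁻¹) :=
    tendsto_nhdsWithin_of_tendsto_nhds (tendsto_inv₀ hM0.ne')
  have hratio := (hdef.const_sub 1).mul hid
  rw [sub_zero, one_mul] at hratio
  have hprod := EReal.Tendsto.mul hlim ((continuous_coe_real_ereal.tendsto _).comp hratio)
    (Or.inr (EReal.coe_ne_bot _)) (Or.inr (EReal.coe_ne_top _))
    (Or.inr (by simpa using hM0.ne')) (Or.inr (by simpa using hM0.ne'))
  refine hprod.congr' ?_
  filter_upwards [self_mem_nhdsWithin, hI.eventually_gt_atTop 0] with l hl hIpos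
  have hl0 : l ≠ 0 := (hM0.trans hl).ne'
  simp only [Function.comp, ← EReal.coe_mul]
  rw [hLk l hl, hFk l hl]
  congr 1
  have := hIpos.ne'
  field_simp
  ring
end

section
/- Assume M > 0, let Λ : (0, +∞) → (M, +∞) be the inverse of the (strictly decreasing, surjective) function L, and set 𝓕(ℓ) = F(Λ(ℓ)) for ℓ > 0. Then 𝓕 is C^∞, strictly increasing from 0 to +∞ and strictly convex on (0, +∞); moreover 𝓕′(ℓ) = 1/Λ(ℓ) for every ℓ > 0, lim_{ℓ→0⁺} 𝓕′(ℓ) = 0, and lim_{ℓ→+∞} 𝓕′(ℓ) = 1/M. -/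
open MeasureTheory Filter Set Topology

/-!
Write `J n f l = ∫ f / (l - C)ⁿ` over one period, for `l > M`. Differentiation under the integral
sign gives `J n f` derivative `-n J (n+1) f` (`hasDerivAt_J`), so `L = J 1 1` is smooth on
`(M, ∞)` with `L' < 0`, and its inverse `Λ` is smooth and strictly decreasing.

The decisive point is `mul_J_two_eq`: almost everywhere
`(Σ / (l - C))' = (c (l - C) - s Σ) / (l - C)² = (l c - 1) / (l - C)²`
by the Pythagorean identity, and the left side integrates to zero over a period because
`Σ / (l - C)` is absolutely continuous and periodic. Hence `l F' = L'`, and the chain rule gives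
`𝓕' = F'(Λ) / L'(Λ) = 1 / Λ`. Everything else is read off from this formula: `1 / Λ` is smooth,
positive and strictly increasing, and since `Λ` is a decreasing bijection of `(0, ∞)` onto
`(M, ∞)`, it tends to `∞` at `0` and to `M` at `∞`. The value `0` at `0⁺` comes from the crude
bound `|F l| ≤ const / (l - M)`, and the divergence at `∞` from a derivative bounded below.
-/

/-- The integral of `f / (l - C) ^ n` over `[0, T]`, as a function of `l`. -/
noncomputable def J (T : ℝ) (C : ℝ → ℝ) (n : ℕ) (f : ℝ → ℝ) (l : ℝ) : ℝ :=
  ∫ θ in (0:ℝ)..T, f θ / (l - C θ) ^ n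

lemma abs_integrand_le {T M B l d : ℝ} {C f : ℝ → ℝ} (hM : ∀ θ ∈ Icc 0 T, C θ ≤ M)
    (hB : ∀ θ, |f θ| ≤ B) (hd : 0 < d) (hl : d ≤ l - M) (n : ℕ) {θ : ℝ} (hθ : θ ∈ Icc 0 T) :
    ‖f θ / (l - C θ) ^ n‖ ≤ B / d ^ n := by
  have h1 : d ≤ l - C θ := by linarith [hM θ hθ]
  have h2 : 0 < l - C θ := by linarith
  rw [Real.norm_eq_abs, abs_div, abs_of_pos (pow_pos h2 n)]
  have hB0 : 0 ≤ B := (abs_nonneg _).trans (hB θ)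
  gcongr
  exact hB θ

lemma intervalIntegrable_integrand {T M B l : ℝ} {C f : ℝ → ℝ} (hT : 0 ≤ T) (hC : Continuous C)
    (hM : ∀ θ ∈ Icc 0 T, C θ ≤ M) (hf : Measurable f) (hB : ∀ θ, |f θ| ≤ B) (hl : M < l) (n : ℕ) :
    IntervalIntegrable (fun θ => f θ / (l - C θ) ^ n) volume 0 T := by
  have hm : Measurable (fun θ => f θ / (l - C θ) ^ n) := by
    have := hC.measurable
    fun_prop
  refine (intervalIntegrable_const (c := B / (l - M) ^ n)).mono_fun' hm.aestronglyMeasurable ?_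
  refine (ae_restrict_mem measurableSet_uIoc).mono fun θ hθ => ?_
  rw [uIoc_of_le hT] at hθ
  exact abs_integrand_le hM hB (by linarith) le_rfl n (Ioc_subset_Icc_self hθ)

lemma hasDerivAt_J {T M B l : ℝ} {C f : ℝ → ℝ} (hT : 0 ≤ T) (hC : Continuous C)
    (hM : ∀ θ ∈ Icc 0 T, C θ ≤ M) (hf : Measurable f) (hB : ∀ θ, |f θ| ≤ B) (hl : M < l) (n : ℕ) :
    HasDerivAt (J T C n f) (-n * J T C (n + 1) f l) l := by
  have hCm := hC.measurable
  have hd : 0 < (l - M) / 2 := by linarith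
  have key := intervalIntegral.hasDerivAt_integral_of_dominated_loc_of_deriv_le
    (μ := volume) (a := 0) (b := T) (x₀ := l) (s := Ioi ((l + M) / 2))
    (F := fun x θ => f θ / (x - C θ) ^ n)
    (F' := fun x θ => -n * (f θ / (x - C θ) ^ (n + 1)))
    (bound := fun _ => n * (B / ((l - M) / 2) ^ (n + 1)))
    (Ioi_mem_nhds (by linarith))
    (.of_forall fun x => (by fun_prop : Measurable _).aestronglyMeasurable)
    (intervalIntegrable_integrand hT hC hM hf hB hl n)
    (by fun_prop : Measurable _).aestronglyMeasurable
    (.of_forall fun θ hθ x hx => by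
      rw [uIoc_of_le hT] at hθ
      have hx' : (l + M) / 2 < x := hx
      have := abs_integrand_le hM hB hd (l := x) (by linarith) (n + 1) (Ioc_subset_Icc_self hθ)
      rw [norm_mul, norm_neg, Real.norm_natCast]
      gcongr)
    intervalIntegrable_const
    (.of_forall fun θ hθ x hx => by
      rw [uIoc_of_le hT] at hθ
      have hx' : (l + M) / 2 < x := hx
      have hp : x - C θ ≠ 0 := by
        have := hM θ (Ioc_subset_Icc_self hθ)
        intro h
        linarith
      have h1 := (((hasDerivAt_id x).sub_const (C θ)).fun_pow n).inv (pow_ne_zero n hp)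
      have h2 := h1.const_mul (f θ)
      refine (h2.congr_deriv ?_).congr_of_eventuallyEq (.of_forall fun y => ?_)
      · cases n with
        | zero => simp
        | succ k => simp only [id, Nat.add_sub_cancel]; field_simp; ring
      · simp [div_eq_mul_inv])
  have h := key.2
  rw [intervalIntegral.integral_const_mul] at h
  exact h

lemma contDiffOn_J {T M B : ℝ} {C f : ℝ → ℝ} (hT : 0 ≤ T) (hC : Continuous C)
    (hM : ∀ θ ∈ Icc 0 T, C θ ≤ M) (hf : Measurable f) (hB : ∀ θ, |f θ| ≤ B) (k : ℕ) :
    ∀ n : ℕ, ContDiffOn ℝ k (J T C n f) (Ioi M) := by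
  have hD := fun n l (hl : l ∈ Ioi M) => hasDerivAt_J hT hC hM hf hB hl n
  induction k with
  | zero =>
    intro n
    exact contDiffOn_zero.2 fun l hl => (hD n l hl).continuousAt.continuousWithinAt
  | succ k ih =>
    intro n
    push_cast
    rw [contDiffOn_succ_iff_deriv_of_isOpen isOpen_Ioi]
    refine ⟨fun l hl => (hD n l hl).differentiableAt.differentiableWithinAt, by simp, ?_⟩
    exact (contDiffOn_const.mul (ih (n + 1))).congr fun l hl => (hD n l hl).deriv

lemma J_one_pos {T M l : ℝ} {C : ℝ → ℝ} (hT : 0 < T) (hC : Continuous C)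
    (hM : ∀ θ ∈ Icc 0 T, C θ ≤ M) (hl : M < l) (n : ℕ) : 0 < J T C n (fun _ => 1) l := by
  refine intervalIntegral.intervalIntegral_pos_of_pos_on
    (intervalIntegrable_integrand (B := 1) hT.le hC hM measurable_const (by simp) hl n)
    (fun θ hθ => ?_) hT
  have := hM θ (Ioo_subset_Icc_self hθ)
  have : 0 < l - C θ := by linarith
  positivity

/-- Integrating `(Σ / (l - C))' = (l c - 1) / (l - C)²` over a period: `l J₂(c) = J₂(1)`. -/
lemma mul_J_two_eq {T M l : ℝ} {C Sg c s : ℝ → ℝ} (hT : 0 < T)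
    (hC_lip : ∃ K : NNReal, LipschitzWith K C)
    (hSg_lip : ∃ K : NNReal, LipschitzWith K Sg)
    (hC_per : Function.Periodic C T) (hSg_per : Function.Periodic Sg T)
    (hc_meas : Measurable c) (hc_bdd : ∃ B : ℝ, ∀ θ, |c θ| ≤ B)
    (hconv : ∀ᵐ θ ∂(volume : Measure ℝ), HasDerivAt C (-(s θ)) θ ∧ HasDerivAt Sg (c θ) θ ∧
      c θ * C θ + s θ * Sg θ = 1)
    (hM : ∀ θ ∈ Icc 0 T, C θ ≤ M) (hl : M < l) :
    l * J T C 2 c l = J T C 2 (fun _ => 1) l := by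
  obtain ⟨K, hK⟩ := hC_lip
  obtain ⟨K', hK'⟩ := hSg_lip
  obtain ⟨B, hB⟩ := hc_bdd
  have hpos : ∀ θ ∈ Icc 0 T, l - M ≤ l - C θ := fun θ hθ => by linarith [hM θ hθ]
  have hac1 : AbsolutelyContinuousOnInterval (fun θ => (l - C θ)⁻¹) 0 T := by
    refine LipschitzOnWith.absolutelyContinuousOnInterval
      (K := ⟨K / (l - M) ^ 2, by positivity⟩) ?_
    rw [uIcc_of_le hT.le]
    refine LipschitzOnWith.of_dist_le_mul fun x hx y hy => ?_
    have h1 := hpos x hx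
    have h2 := hpos y hy
    have h0 : 0 < l - M := by linarith
    have h1' : 0 < l - C x := by linarith
    have h2' : 0 < l - C y := by linarith
    have h3 := hK.dist_le_mul x y
    rw [Real.dist_eq] at h3 ⊢
    have h4 : (l - C x)⁻¹ - (l - C y)⁻¹ = (C x - C y) / ((l - C x) * (l - C y)) := by
      field_simp
      ring
    rw [h4, abs_div, abs_of_pos (mul_pos h1' h2')]
    change _ ≤ K / (l - M) ^ 2 * dist x y
    rw [div_mul_eq_mul_div, sq]
    gcongr
  have hac2 : AbsolutelyContinuousOnInterval Sg 0 T :=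
    (hK'.lipschitzOnWith).absolutelyContinuousOnInterval
  have hftc := (hac2.mul hac1).integral_deriv_eq_sub
  have hC0 : C T = C 0 := by simpa using hC_per 0
  have hS0 : Sg T = Sg 0 := by simpa using hSg_per 0
  have hzero : (Sg * fun θ => (l - C θ)⁻¹) T - (Sg * fun θ => (l - C θ)⁻¹) 0 = 0 := by
    simp [hC0, hS0]
  rw [hzero] at hftc
  have hcongr : ∫ θ in (0:ℝ)..T, deriv (Sg * fun θ => (l - C θ)⁻¹) θ =
      ∫ θ in (0:ℝ)..T, (l * (c θ / (l - C θ) ^ 2) - 1 / (l - C θ) ^ 2) := by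
    refine intervalIntegral.integral_congr_ae (hconv.mono fun θ h hθ => ?_)
    obtain ⟨hdC, hdS, hpy⟩ := h
    rw [uIoc_of_le hT.le] at hθ
    have hp : l - C θ ≠ 0 := by
      have := hM θ (Ioc_subset_Icc_self hθ)
      intro h
      linarith
    rw [(hdS.mul ((hdC.const_sub l).fun_inv hp)).deriv]
    field_simp
    linear_combination -hpy
  rw [hcongr, intervalIntegral.integral_sub, intervalIntegral.integral_const_mul] at hftc
  · unfold J
    linarith
  · exact (intervalIntegrable_integrand hT.le hK.continuous hM hc_meas hB hl 2).const_mul l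
  · exact intervalIntegrable_integrand (B := 1) hT.le hK.continuous hM measurable_const
      (by simp) hl 2

lemma abs_J_one_le {T M B l : ℝ} {C f : ℝ → ℝ} (hT : 0 ≤ T)
    (hM : ∀ θ ∈ Icc 0 T, C θ ≤ M) (hB : ∀ θ, |f θ| ≤ B) (hl : M < l) :
    |J T C 1 f l| ≤ B / (l - M) * T := by
  have := intervalIntegral.norm_integral_le_of_norm_le_const (a := 0) (b := T)
    (f := fun θ => f θ / (l - C θ) ^ 1) (C := B / (l - M) ^ 1) (fun θ hθ => by
      rw [uIoc_of_le hT] at hθ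
      exact abs_integrand_le hM hB (by linarith) le_rfl 1 (Ioc_subset_Icc_self hθ))
  simpa [J, abs_of_nonneg hT] using this

theorem stmt12
    (S : ℝ) (hS : 0 < S)
    (C Sg c s : ℝ → ℝ)
    (hC_lip : ∃ K : NNReal, LipschitzWith K C)
    (hSg_lip : ∃ K : NNReal, LipschitzWith K Sg)
    (hC_per : Function.Periodic C (2 * S))
    (hSg_per : Function.Periodic Sg (2 * S))
    (hc_meas : Measurable c) (hs_meas : Measurable s)
    (hc_bdd : ∃ B : ℝ, ∀ θ, |c θ| ≤ B) (hs_bdd : ∃ B : ℝ, ∀ θ, |s θ| ≤ B)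
    (hconv : ∀ᵐ θ ∂(volume : Measure ℝ), HasDerivAt C (-(s θ)) θ ∧ HasDerivAt Sg (c θ) θ ∧
      c θ * C θ + s θ * Sg θ = 1)
    (M : ℝ) (hM : IsGreatest (C '' Set.Icc 0 (2 * S)) M)
    (L F : ℝ → ℝ)
    (hL : ∀ l : ℝ, M < l → L l = ∫ θ in (0:ℝ)..(2*S), 1 / (l - C θ))
    (hF : ∀ l : ℝ, M < l → F l = ∫ θ in (0:ℝ)..(2*S), c θ / (l - C θ))
    (hM0 : 0 < M)
    (Λ : ℝ → ℝ)
    (hΛmem : ∀ x : ℝ, 0 < x → M < Λ x)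
    (hΛright : ∀ x : ℝ, 0 < x → L (Λ x) = x)
    (hΛleft : ∀ l : ℝ, M < l → Λ (L l) = l)
    (G : ℝ → ℝ) (hG : ∀ x : ℝ, 0 < x → G x = F (Λ x)) :
    ContDiffOn ℝ (⊤ : ℕ∞) G (Set.Ioi 0) ∧
    StrictMonoOn G (Set.Ioi 0) ∧
    Tendsto G (𝓝[>] (0:ℝ)) (𝓝 0) ∧
    Tendsto G atTop atTop ∧
    StrictConvexOn ℝ (Set.Ioi 0) G ∧
    (∀ x : ℝ, 0 < x → deriv G x = 1 / Λ x) ∧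
    Tendsto (deriv G) (𝓝[>] (0:ℝ)) (𝓝 0) ∧
    Tendsto (deriv G) atTop (𝓝 (1 / M)) := by
  obtain ⟨T, hTdef⟩ : ∃ T, T = 2 * S := ⟨_, rfl⟩
  rw [← hTdef] at hC_per hSg_per hM
  simp only [← hTdef] at hL hF
  have hT : 0 < T := by linarith
  have hCle : ∀ θ ∈ Icc 0 T, C θ ≤ M := fun θ hθ => hM.2 ⟨θ, hθ, rfl⟩
  have hCc : Continuous C := hC_lip.choose_spec.continuous
  obtain ⟨B, hB⟩ := hc_bdd
  have hLJ : ∀ l, M < l → L l = J T C 1 (fun _ => 1) l := fun l hl => by simp [hL l hl, J]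
  have hFJ : ∀ l, M < l → F l = J T C 1 c l := fun l hl => by simp [hF l hl, J]
  have hL' : ∀ l, M < l → HasDerivAt L (-J T C 2 (fun _ => 1) l) l := fun l hl => by
    have h := hasDerivAt_J (B := 1) hT.le hCc hCle (measurable_const (a := (1:ℝ))) (by simp) hl 1
    refine (h.congr_deriv (by simp)).congr_of_eventuallyEq ?_
    filter_upwards [Ioi_mem_nhds hl] with x hx using hLJ x hx
  have hF' : ∀ l, M < l → HasDerivAt F (-J T C 2 c l) l := fun l hl => by
    have h := hasDerivAt_J hT.le hCc hCle hc_meas hB hl 1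
    refine (h.congr_deriv (by simp)).congr_of_eventuallyEq ?_
    filter_upwards [Ioi_mem_nhds hl] with x hx using hFJ x hx
  have hJ2 : ∀ l, M < l → 0 < J T C 2 (fun _ => 1) l := fun l hl => J_one_pos hT hCc hCle hl 2
  have hLpos : ∀ l, M < l → 0 < L l := fun l hl => hLJ l hl ▸ J_one_pos hT hCc hCle hl 1
  have hLanti : StrictAntiOn L (Ioi M) := by
    refine strictAntiOn_of_deriv_neg (convex_Ioi M)
      (fun l hl => (hL' l hl).continuousAt.continuousWithinAt) fun l hl => ?_
    rw [interior_Ioi] at hl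
    rw [(hL' l hl).deriv]
    linarith [hJ2 l hl]
  have hΛanti : StrictAntiOn Λ (Ioi 0) := fun x hx y hy hxy => by
    rw [← hLanti.lt_iff_gt (hΛmem x hx) (hΛmem y hy), hΛright x hx, hΛright y hy]
    exact hxy
  have hΛcont : ∀ x, 0 < x → ContinuousAt Λ x := fun x hx => by
    have hmono : StrictMonoOn (fun y => -Λ y) (Ioi 0) := fun a ha b hb hab =>
      neg_lt_neg (hΛanti ha hb hab)
    have himg : (fun y => -Λ y) '' Ioi 0 ∈ 𝓝 (-Λ x) := by
      refine mem_of_superset (Iio_mem_nhds (neg_lt_neg (hΛmem x hx))) fun y hy => ?_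
      have hy' : M < -y := by
        have : y < -M := hy
        linarith
      exact ⟨L (-y), hLpos _ hy', by simp [hΛleft _ hy']⟩
    simpa only [Pi.neg_def, neg_neg] using
      (hmono.continuousAt_of_image_mem_nhds (Ioi_mem_nhds hx) himg).neg
  have hΛ' : ∀ x, 0 < x → HasDerivAt Λ (-J T C 2 (fun _ => 1) (Λ x))⁻¹ x := fun x hx =>
    HasDerivAt.of_local_left_inverse (hΛcont x hx) (hL' _ (hΛmem x hx))
      (neg_ne_zero.2 (hJ2 _ (hΛmem x hx)).ne')
      (by filter_upwards [Ioi_mem_nhds hx] with y hy using hΛright y hy)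
  have hG' : ∀ x, 0 < x → HasDerivAt G (1 / Λ x) x := fun x hx => by
    have hm := hΛmem x hx
    have h := (hF' _ hm).comp x (hΛ' x hx)
    refine (h.congr_deriv ?_).congr_of_eventuallyEq ?_
    · have hid := mul_J_two_eq hT hC_lip hSg_lip hC_per hSg_per hc_meas ⟨B, hB⟩ hconv hCle hm
      have h0 : Λ x ≠ 0 := (hM0.trans hm).ne'
      have h2 := (hJ2 _ hm).ne'
      field_simp
      linarith
    · filter_upwards [Ioi_mem_nhds hx] with y hy using hG y hy
  have hGd : ∀ x, 0 < x → deriv G x = 1 / Λ x := fun x hx => (hG' x hx).deriv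
  have hΛsmooth : ∀ k : ℕ, ContDiffOn ℝ k Λ (Ioi 0) := by
    intro k
    induction k with
    | zero => exact contDiffOn_zero.2 fun x hx => (hΛcont x hx).continuousWithinAt
    | succ k ih =>
      push_cast
      rw [contDiffOn_succ_iff_deriv_of_isOpen isOpen_Ioi]
      refine ⟨fun x hx => (hΛ' x hx).differentiableAt.differentiableWithinAt, by simp, ?_⟩
      have hJs := contDiffOn_J (B := 1) hT.le hCc hCle (measurable_const (a := (1:ℝ)))
        (by simp) k 2
      have hcomp := (hJs.comp ih fun x hx => hΛmem x hx).neg.inv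
        fun x hx => neg_ne_zero.2 (hJ2 _ (hΛmem x hx)).ne'
      exact hcomp.congr fun x hx => (hΛ' x hx).deriv
  have hΛ0 : Tendsto Λ (𝓝[>] (0:ℝ)) atTop := by
    refine tendsto_atTop.2 fun b => ?_
    have hb : M < max b (M + 1) := lt_max_of_lt_right (by linarith)
    filter_upwards [Ioo_mem_nhdsGT (hLpos _ hb)] with x hx
    have := hΛanti hx.1 (hLpos _ hb) hx.2
    rw [hΛleft _ hb] at this
    exact (le_max_left _ _).trans this.le
  have hΛtop : Tendsto Λ atTop (𝓝 M) := by
    refine tendsto_order.2 ⟨fun a ha => ?_, fun a ha => ?_⟩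
    · filter_upwards [eventually_gt_atTop 0] with x hx using ha.trans (hΛmem x hx)
    · filter_upwards [eventually_gt_atTop (L a)] with x hx
      have := hΛanti (hLpos a ha) ((hLpos a ha).trans hx) hx
      rwa [hΛleft a ha] at this
  have hGcont : ContinuousOn G (Ioi 0) := fun x hx => (hG' x hx).continuousAt.continuousWithinAt
  have hΛpos : ∀ x, 0 < x → 0 < Λ x := fun x hx => hM0.trans (hΛmem x hx)
  have hd0 : Tendsto (fun x => 1 / Λ x) (𝓝[>] (0:ℝ)) (𝓝 0) := by
    simpa [Pi.inv_def] using hΛ0.inv_tendsto_atTop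
  have hdtop : Tendsto (fun x => 1 / Λ x) atTop (𝓝 (1 / M)) := tendsto_const_nhds.div hΛtop hM0.ne'
  have hconvG : StrictConvexOn ℝ (Ioi 0) G := by
    refine StrictMonoOn.strictConvexOn_of_deriv (convex_Ioi 0) hGcont ?_
    rw [interior_Ioi]
    intro x hx y hy hxy
    rw [hGd x hx, hGd y hy]
    exact one_div_lt_one_div_of_lt (hΛpos y hy) (hΛanti hx hy hxy)
  refine ⟨?_, ?_, ?_, ?_, hconvG, hGd, ?_, ?_⟩
  · refine contDiffOn_infty.2 fun k => ?_
    cases k with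
    | zero => exact contDiffOn_zero.2 hGcont
    | succ k =>
      push_cast
      rw [contDiffOn_succ_iff_deriv_of_isOpen isOpen_Ioi]
      refine ⟨fun x hx => (hG' x hx).differentiableAt.differentiableWithinAt, by simp, ?_⟩
      exact (contDiffOn_const.div (hΛsmooth k) fun x hx => (hΛpos x hx).ne').congr hGd
  · refine strictMonoOn_of_deriv_pos (convex_Ioi 0) hGcont fun x hx => ?_
    rw [interior_Ioi] at hx
    rw [hGd x hx]
    exact one_div_pos.2 (hΛpos x hx)
  · have hb : Tendsto (fun x => B / (Λ x - M) * T) (𝓝[>] (0:ℝ)) (𝓝 0) := by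
      simpa [← sub_eq_add_neg] using ((tendsto_atTop_add_const_right _ (-M) hΛ0).const_div_atTop B).mul_const T
    refine squeeze_zero_norm' ?_ hb
    filter_upwards [self_mem_nhdsWithin] with x hx
    rw [hG x hx, hFJ _ (hΛmem x hx)]
    exact abs_J_one_le hT.le hCle hB (hΛmem x hx)
  · have hlin : Tendsto (fun x => G 1 + 1 / Λ 1 * (x - 1)) atTop atTop := by
      refine tendsto_atTop_add_const_left _ _ (Tendsto.const_mul_atTop
        (one_div_pos.2 (hΛpos 1 one_pos)) (tendsto_atTop_add_const_right _ (-1) tendsto_id))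
    -- On `[1, ∞)` the derivative is at least `1 / Λ 1`, so `G` dominates an affine function.
    refine tendsto_atTop_mono' _ ?_ hlin
    filter_upwards [eventually_ge_atTop 1] with x hx
    have hsub : Icc 1 x ⊆ Ioi (0:ℝ) := fun y hy => lt_of_lt_of_le one_pos hy.1
    have := (convex_Icc 1 x).mul_sub_le_image_sub_of_le_deriv (f := G) (C := 1 / Λ 1)
      (hGcont.mono hsub)
      (fun y hy => (hG' y (hsub (interior_subset hy))).differentiableAt.differentiableWithinAt)
      (fun y hy => by
        have hy := interior_subset hy
        rw [hGd y (hsub hy)]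
        exact one_div_le_one_div_of_le (hΛpos y (hsub hy))
          (hΛanti.antitoneOn (mem_Ioi.2 one_pos) (hsub hy) hy.1))
      1 ⟨le_rfl, hx⟩ x ⟨hx, le_rfl⟩ hx
    linarith
  · exact hd0.congr' (by filter_upwards [self_mem_nhdsWithin] with x hx using (hGd x hx).symm)
  · exact hdtop.congr' (by filter_upwards [eventually_gt_atTop 0] with x hx using (hGd x hx).symm)
end

section
/- Assume M > 0, let Λ : (0, +∞) → (M, +∞) be the inverse of the (strictly decreasing, surjective) function L, and set 𝓕(ℓ) = F(Λ(ℓ)) for ℓ > 0. Then lim_{ℓ→0⁺} 𝓕(ℓ)/(ℓ·𝓕′(ℓ)) = 1/2, lim_{ℓ→0⁺} 𝓕(ℓ)/ℓ² = 1/(4S), and lim_{ℓ→+∞} 𝓕(ℓ)/ℓ = 1/M. -/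
/-!
Write `I l = ∫ 1 / (l - C) ^ 2` over a period. Differentiating under the integral gives `L' = -I`
and `F' = -∫ c / (l - C) ^ 2`. The function `Sg / (l - C)` is periodic and Lipschitz, so its a.e.
derivative integrates to zero; by the Pythagorean identity that derivative is
`(l * c - 1) / (l - C) ^ 2`, whence `I = -l * F'` (`integral_pythagorean`). Therefore `L' = l * F'`,
and with `Λ = L⁻¹`, `G = F ∘ Λ` one gets the key formula `G' = 1 / Λ`.

Everything else follows from the asymptotics of `Λ`. As `x → 0⁺`, `Λ x → ∞` and `x * Λ x → 2 * S`,
because `l * L l = 2 * S + ∫ C / (l - C)`; moreover `G x → 0`, so l'Hôpital's rule yields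
`G x / x ^ 2 → 1 / (4 * S)`, and the first limit is the product of the two. As `x → ∞`, `Λ x → M`,
so `G' → 1 / M` and hence `G x / x → 1 / M` (`tendsto_div_of_deriv_tendsto`).
-/

open MeasureTheory Filter Set Topology

lemma intervalIntegrable_of_bdd {A B : ℝ} (hA : 0 ≤ A) {h : ℝ → ℝ} (hm : Measurable h)
    (hb : ∀ θ ∈ Icc 0 A, |h θ| ≤ B) : IntervalIntegrable h volume 0 A := by
  refine IntervalIntegrable.mono_fun' (g := fun _ => B) intervalIntegrable_const
    hm.aestronglyMeasurable ?_
  refine (ae_restrict_iff' measurableSet_uIoc).2 (Eventually.of_forall fun θ hθ => ?_)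
  rw [uIoc_of_le hA] at hθ
  exact hb θ (Ioc_subset_Icc_self hθ)

lemma abs_integral_div_le {A B M l : ℝ} (hA : 0 ≤ A) {C g : ℝ → ℝ}
    (hCM : ∀ θ ∈ Icc 0 A, C θ ≤ M) (hg : ∀ θ ∈ Icc 0 A, |g θ| ≤ B) (hl : M < l) :
    |∫ θ in (0:ℝ)..A, g θ / (l - C θ)| ≤ B / (l - M) * A := by
  have := intervalIntegral.norm_integral_le_of_norm_le_const (a := 0) (b := A)
    (f := fun θ => g θ / (l - C θ)) (C := B / (l - M)) (fun θ hθ => ?_)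
  · simpa [abs_of_nonneg hA] using this
  · rw [uIoc_of_le hA] at hθ
    have hθ' := Ioc_subset_Icc_self hθ
    have h1 := hCM θ hθ'
    have h2 := hg θ hθ'
    rw [Real.norm_eq_abs, abs_div, abs_of_pos (show 0 < l - C θ by linarith)]
    have : 0 ≤ B := (abs_nonneg _).trans h2
    gcongr

lemma tendsto_integral_div_zero {A B M : ℝ} (hA : 0 ≤ A) {C g : ℝ → ℝ}
    (hCM : ∀ θ ∈ Icc 0 A, C θ ≤ M) (hg : ∀ θ ∈ Icc 0 A, |g θ| ≤ B) :
    Tendsto (fun l => ∫ θ in (0:ℝ)..A, g θ / (l - C θ)) atTop (𝓝 0) := by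
  refine squeeze_zero_norm' (a := fun l => B / (l - M) * A) ?_ ?_
  · filter_upwards [eventually_gt_atTop M] with l hl
    exact abs_integral_div_le hA hCM hg hl
  · have h1 : Tendsto (fun l : ℝ => l - M) atTop atTop := tendsto_atTop_add_const_right _ _ tendsto_id
    simpa using (h1.const_div_atTop B).mul_const A

lemma intervalIntegrable_div {A B M l : ℝ} (n : ℕ) (hA : 0 ≤ A) {C g : ℝ → ℝ} (hC : Measurable C)
    (hgm : Measurable g)
    (hCM : ∀ θ ∈ Icc 0 A, C θ ≤ M) (hg : ∀ θ ∈ Icc 0 A, |g θ| ≤ B) (hl : M < l) :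
    IntervalIntegrable (fun θ => g θ / (l - C θ) ^ n) volume 0 A := by
  refine intervalIntegrable_of_bdd (B := B / (l - M) ^ n) hA (by fun_prop) fun θ hθ => ?_
  have h1 := hCM θ hθ
  have h2 := hg θ hθ
  have h3 : 0 < l - C θ := by linarith
  have h4 : 0 < l - M := by linarith
  rw [abs_div, abs_of_pos (pow_pos h3 n)]
  have : 0 ≤ B := (abs_nonneg _).trans h2
  gcongr

/-- Differentiation under the integral sign in the parameter `l`; the dominating function on the
half-line above the midpoint of `M` and `l` is constant. -/
lemma hasDerivAt_integral_div {A B M l : ℝ} (hA : 0 ≤ A) {C g : ℝ → ℝ} (hC : Measurable C)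
    (hgm : Measurable g)
    (hCM : ∀ θ ∈ Icc 0 A, C θ ≤ M) (hg : ∀ θ ∈ Icc 0 A, |g θ| ≤ B) (hl : M < l) :
    HasDerivAt (fun l => ∫ θ in (0:ℝ)..A, g θ / (l - C θ))
      (-∫ θ in (0:ℝ)..A, g θ / (l - C θ) ^ 2) l := by
  set m := (M + l) / 2 with hm
  have hMm : M < m := by linarith
  have hml : m < l := by linarith
  have key := intervalIntegral.hasDerivAt_integral_of_dominated_loc_of_deriv_le
    (μ := volume) (a := 0) (b := A) (F := fun l θ => g θ / (l - C θ))
    (F' := fun l θ => -(g θ / (l - C θ) ^ 2)) (x₀ := l) (s := Ioi m)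
    (bound := fun _ => B / (m - M) ^ 2) (Ioi_mem_nhds hml)
    (Eventually.of_forall fun x => (by fun_prop : Measurable _).aestronglyMeasurable)
    (by simpa using intervalIntegrable_div 1 hA hC hgm hCM hg hl)
    ((by fun_prop : Measurable _).aestronglyMeasurable)
    (Eventually.of_forall fun θ hθ x hx => ?_) intervalIntegrable_const
    (Eventually.of_forall fun θ hθ x hx => ?_)
  · simpa using key.2
  · rw [uIoc_of_le hA] at hθ
    have hθ' := Ioc_subset_Icc_self hθ
    have h1 := hCM θ hθ'
    have h2 := hg θ hθ'
    have hx' : m < x := hx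
    have h3 : 0 < x - C θ := by linarith
    have h4 : 0 < m - M := by linarith
    rw [norm_neg, Real.norm_eq_abs, abs_div, abs_of_pos (pow_pos h3 2)]
    have : 0 ≤ B := (abs_nonneg _).trans h2
    gcongr
  · rw [uIoc_of_le hA] at hθ
    have h1 := hCM θ (Ioc_subset_Icc_self hθ)
    have hx' : m < x := hx
    have h3 : x - C θ ≠ 0 := by linarith
    have := (((hasDerivAt_id x).sub_const (C θ)).inv h3).const_mul (g θ)
    convert! this using 1
    simp only [id]
    ring

/-- The integral over a period of the derivative of `Sg / (l - C)` vanishes; by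
`c * C + s * Sg = 1` that derivative equals `(l * c - 1) / (l - C) ^ 2`. -/
lemma integral_pythagorean {A B M l : ℝ} (hA : 0 ≤ A) {C Sg c s : ℝ → ℝ}
    (hC_lip : ∃ K : NNReal, LipschitzWith K C)
    (hSg_lip : ∃ K : NNReal, LipschitzWith K Sg)
    (hC0 : C A = C 0) (hSg0 : Sg A = Sg 0)
    (hc_meas : Measurable c) (hc_bdd : ∀ θ, |c θ| ≤ B)
    (hconv : ∀ᵐ θ ∂(volume : Measure ℝ), HasDerivAt C (-(s θ)) θ ∧ HasDerivAt Sg (c θ) θ ∧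
      c θ * C θ + s θ * Sg θ = 1)
    (hCM : ∀ θ ∈ Icc 0 A, C θ ≤ M) (hl : M < l) :
    ∫ θ in (0:ℝ)..A, 1 / (l - C θ) ^ 2 = l * ∫ θ in (0:ℝ)..A, c θ / (l - C θ) ^ 2 := by
  obtain ⟨K, hK⟩ := hC_lip
  obtain ⟨K', hK'⟩ := hSg_lip
  have hCm : Measurable C := hK.continuous.measurable
  have hlM : 0 < l - M := by linarith
  have hinv : LipschitzOnWith (K * (1 / (l - M) ^ 2).toNNReal) (fun θ => (l - C θ)⁻¹)
      (uIcc 0 A) := by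
    refine LipschitzOnWith.of_dist_le_mul fun x hx y hy => ?_
    rw [uIcc_of_le hA] at hx hy
    have h1 := hCM x hx
    have h2 := hCM y hy
    have h3 : 0 < l - C x := by linarith
    have h4 : 0 < l - C y := by linarith
    have h5 := hK.dist_le_mul x y
    rw [Real.dist_eq] at h5 ⊢
    have : (l - C x)⁻¹ - (l - C y)⁻¹ = (C x - C y) / ((l - C x) * (l - C y)) := by
      field_simp
      ring
    rw [this, abs_div, abs_of_pos (mul_pos h3 h4), NNReal.coe_mul, Real.coe_toNNReal _ (by positivity)]
    calc |C x - C y| / ((l - C x) * (l - C y)) ≤ (K * dist x y) / ((l - M) * (l - M)) := by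
          gcongr
      _ = _ := by field_simp
  have h := ((hK'.lipschitzOnWith (s := uIcc 0 A)).absolutelyContinuousOnInterval.fun_mul
    hinv.absolutelyContinuousOnInterval).integral_deriv_eq_sub
  rw [hC0, hSg0, sub_self] at h
  have hae : ∀ᵐ θ ∂(volume : Measure ℝ), θ ∈ uIoc 0 A →
      deriv (fun θ => Sg θ * (l - C θ)⁻¹) θ = l * (c θ / (l - C θ) ^ 2) - 1 / (l - C θ) ^ 2 := by
    filter_upwards [hconv] with θ ⟨h1, h2, h3⟩ hθ
    rw [uIoc_of_le hA] at hθ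
    have h4 := hCM θ (Ioc_subset_Icc_self hθ)
    have h5 : l - C θ ≠ 0 := by linarith
    have h6 := h2.mul ((h1.const_sub l).inv h5)
    have h7 : HasDerivAt (fun θ => Sg θ * (l - C θ)⁻¹)
        (c θ * (l - C θ)⁻¹ + Sg θ * (- - -s θ / (l - C θ) ^ 2)) θ := h6
    rw [h7.deriv]
    field_simp
    linear_combination -h3
  rw [intervalIntegral.integral_congr_ae hae, intervalIntegral.integral_sub,
    intervalIntegral.integral_const_mul] at h
  · linarith
  · exact (intervalIntegrable_div 2 hA hCm hc_meas hCM (fun θ _ => hc_bdd θ) hl).const_mul l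
  · exact intervalIntegrable_div (B := 1) (g := fun _ => 1) 2 hA hCm measurable_const hCM
      (by simp) hl

/-- If `G' → a` at `+∞`, then `G x / x → a`. -/
lemma tendsto_div_of_deriv_tendsto {G G' : ℝ → ℝ} {a : ℝ}
    (hG : ∀ x, 0 < x → HasDerivAt G (G' x) x) (h : Tendsto G' atTop (𝓝 a)) :
    Tendsto (fun x => G x / x) atTop (𝓝 a) := by
  rw [Metric.tendsto_atTop] at h ⊢
  intro ε hε
  obtain ⟨N, hN⟩ := h (ε / 2) (by positivity)
  set P := max N 1 with hP
  have hP1 : 1 ≤ P := le_max_right _ _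
  set D := |G P - a * P| with hD
  have hD0 : 0 ≤ D := abs_nonneg _
  refine ⟨P + 4 * D / ε, fun x hx => ?_⟩
  have h4 : 0 ≤ 4 * D / ε := by positivity
  have hxP : P ≤ x := by linarith
  have hx0 : 0 < x := by linarith
  have hb : |(G x - a * x) - (G P - a * P)| ≤ ε / 2 * |x - P| := by
    refine Convex.norm_image_sub_le_of_norm_hasDerivWithin_le (f := fun x => G x - a * x)
      (f' := fun x => G' x - a) (s := Ici P) (fun y hy => ?_) (fun y hy => ?_) (convex_Ici P)
      self_mem_Ici hxP
    · have hy' : P ≤ y := hy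
      have := (hG y (by linarith)).sub ((hasDerivAt_id y).const_mul a)
      rw [mul_one] at this
      exact this.hasDerivWithinAt
    · exact (hN y ((le_max_left _ _).trans hy)).le
  rw [abs_of_nonneg (sub_nonneg.2 hxP)] at hb
  have h5 : |G x - a * x| ≤ D + ε / 2 * (x - P) := by
    have := abs_add_le ((G x - a * x) - (G P - a * P)) (G P - a * P)
    rw [sub_add_cancel] at this
    linarith
  have h6 : D < ε / 2 * x := by
    have : 4 * D / ε < x := by linarith
    rw [div_lt_iff₀ hε] at this
    nlinarith
  have h7 : G x / x - a = (G x - a * x) / x := by field_simp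
  rw [Real.dist_eq, h7, abs_div, abs_of_pos hx0, div_lt_iff₀ hx0]
  nlinarith

theorem stmt14
    (S : ℝ) (hS : 0 < S)
    (C Sg c s : ℝ → ℝ)
    (hC_lip : ∃ K : NNReal, LipschitzWith K C)
    (hSg_lip : ∃ K : NNReal, LipschitzWith K Sg)
    (hC_per : Function.Periodic C (2 * S))
    (hSg_per : Function.Periodic Sg (2 * S))
    (hc_meas : Measurable c) (hs_meas : Measurable s)
    (hc_bdd : ∃ B : ℝ, ∀ θ, |c θ| ≤ B) (hs_bdd : ∃ B : ℝ, ∀ θ, |s θ| ≤ B)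
    (hconv : ∀ᵐ θ ∂(volume : Measure ℝ), HasDerivAt C (-(s θ)) θ ∧ HasDerivAt Sg (c θ) θ ∧
      c θ * C θ + s θ * Sg θ = 1)
    (M : ℝ) (hM : IsGreatest (C '' Set.Icc 0 (2 * S)) M)
    (L F : ℝ → ℝ)
    (hL : ∀ l : ℝ, M < l → L l = ∫ θ in (0:ℝ)..(2*S), 1 / (l - C θ))
    (hF : ∀ l : ℝ, M < l → F l = ∫ θ in (0:ℝ)..(2*S), c θ / (l - C θ))
    (hM0 : 0 < M)
    (Λ : ℝ → ℝ)
    (hΛmem : ∀ x : ℝ, 0 < x → M < Λ x)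
    (hΛright : ∀ x : ℝ, 0 < x → L (Λ x) = x)
    (hΛleft : ∀ l : ℝ, M < l → Λ (L l) = l)
    (G : ℝ → ℝ) (hG : ∀ x : ℝ, 0 < x → G x = F (Λ x)) :
    Tendsto (fun x : ℝ => G x / (x * deriv G x)) (𝓝[>] (0:ℝ)) (𝓝 (1 / 2)) ∧
    Tendsto (fun x : ℝ => G x / x ^ 2) (𝓝[>] (0:ℝ)) (𝓝 (1 / (4 * S))) ∧
    Tendsto (fun x : ℝ => G x / x) atTop (𝓝 (1 / M)) := by

  have hA : 0 < 2 * S := by linarith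
  set A := 2 * S with hAdef
  obtain ⟨B, hB⟩ := hc_bdd
  have hCc : Continuous C := hC_lip.choose_spec.continuous
  have hCm : Measurable C := hCc.measurable
  have hCM : ∀ θ ∈ Icc 0 A, C θ ≤ M := fun θ hθ => hM.2 (mem_image_of_mem C hθ)
  obtain ⟨B', hB'⟩ := isCompact_Icc.exists_bound_of_continuousOn (hCc.continuousOn (s := Icc 0 A))
  have h1B : ∀ θ ∈ Icc 0 A, |(fun _ : ℝ => (1:ℝ)) θ| ≤ 1 := by simp
  have hcB : ∀ θ ∈ Icc 0 A, |c θ| ≤ B := fun θ _ => hB θ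
  have hC0 : C A = C 0 := by simpa using hC_per 0
  have hSg0 : Sg A = Sg 0 := by simpa using hSg_per 0
  set I : ℝ → ℝ := fun l => ∫ θ in (0:ℝ)..A, 1 / (l - C θ) ^ 2 with hI
  have hIpos : ∀ l, M < l → 0 < I l := by
    intro l hl
    refine intervalIntegral.intervalIntegral_pos_of_pos_on
      (intervalIntegrable_div 2 hA.le hCm measurable_const hCM h1B hl) (fun θ hθ => ?_) hA
    have := hCM θ (Ioo_subset_Icc_self hθ)
    have : 0 < l - C θ := by linarith
    positivity
  have hLpos : ∀ l, M < l → 0 < L l := by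
    intro l hl
    rw [hL l hl]
    refine intervalIntegral.intervalIntegral_pos_of_pos_on
      (by simpa using intervalIntegrable_div 1 hA.le hCm measurable_const hCM h1B hl)
      (fun θ hθ => ?_) hA
    have := hCM θ (Ioo_subset_Icc_self hθ)
    have : 0 < l - C θ := by linarith
    positivity
  have hLd : ∀ l, M < l → HasDerivAt L (-I l) l := by
    intro l hl
    refine (hasDerivAt_integral_div hA.le hCm measurable_const hCM h1B hl).congr_of_eventuallyEq ?_
    filter_upwards [Ioi_mem_nhds hl] with y hy using hL y hy
  have hFd : ∀ l, M < l → HasDerivAt F (-(I l / l)) l := by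
    intro l hl
    have h := hasDerivAt_integral_div hA.le hCm hc_meas hCM hcB hl
    have hl0 : l ≠ 0 := (hM0.trans hl).ne'
    have e : I l / l = ∫ θ in (0:ℝ)..A, c θ / (l - C θ) ^ 2 := by
      rw [hI]
      simp only
      rw [integral_pythagorean hA.le hC_lip hSg_lip hC0 hSg0 hc_meas hB hconv hCM hl]
      field_simp
    rw [e]
    refine h.congr_of_eventuallyEq ?_
    filter_upwards [Ioi_mem_nhds hl] with y hy using hF y hy
  have hLanti : StrictAntiOn L (Ioi M) := by
    refine strictAntiOn_of_deriv_neg (convex_Ioi M)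
      (fun l hl => (hLd l hl).continuousAt.continuousWithinAt) fun l hl => ?_
    rw [interior_Ioi] at hl
    rw [(hLd l hl).deriv]
    linarith [hIpos l hl]
  -- Comparison of `Λ` with a threshold `l` through the monotonicity of `L`.
  have hΛlt : ∀ l x, M < l → L l < x → Λ x < l := by
    intro l x hl hx
    by_contra! hcon
    have hx0 := (hLpos l hl).trans hx
    have := hLanti.antitoneOn hl (hΛmem x hx0) hcon
    rw [hΛright x hx0] at this
    linarith
  have hΛgt : ∀ l x, M < l → 0 < x → x < L l → l < Λ x := by
    intro l x hl hx0 hx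
    by_contra! hcon
    have := hLanti.antitoneOn (hΛmem x hx0) hl hcon
    rw [hΛright x hx0] at this
    linarith
  have hΛtop : Tendsto Λ atTop (𝓝 M) := by
    refine tendsto_order.2 ⟨fun a ha => ?_, fun a ha => ?_⟩
    · filter_upwards [eventually_gt_atTop 0] with x hx using ha.trans (hΛmem x hx)
    · filter_upwards [eventually_gt_atTop (L a)] with x hx using hΛlt a x ha hx
  have hΛzero : Tendsto Λ (𝓝[>] 0) atTop := by
    refine tendsto_atTop.2 fun b => ?_
    have hb : M < max b (M + 1) := lt_of_lt_of_le (by linarith) (le_max_right _ _)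
    filter_upwards [Ioo_mem_nhdsGT (hLpos _ hb)] with x hx
    exact (le_max_left _ _).trans (hΛgt _ x hb hx.1 hx.2).le
  have hΛcont : ∀ x, 0 < x → ContinuousAt Λ x := by
    intro x hx
    refine tendsto_order.2 ⟨fun a ha => ?_, fun a ha => ?_⟩
    · by_cases haM : M < a
      · have h1 : x < L a := by
          have := hLanti haM (hΛmem x hx) ha
          rwa [hΛright x hx] at this
        filter_upwards [Ioo_mem_nhds hx h1] with y hy using hΛgt a y haM hy.1 hy.2
      · filter_upwards [Ioi_mem_nhds hx] with y hy
        exact lt_of_le_of_lt (not_lt.1 haM) (hΛmem y hy)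
    · have haM := (hΛmem x hx).trans ha
      have h1 : L a < x := by
        have := hLanti (hΛmem x hx) haM ha
        rwa [hΛright x hx] at this
      filter_upwards [Ioi_mem_nhds h1] with y hy using hΛlt a y haM hy
  have hGd : ∀ x, 0 < x → HasDerivAt G (1 / Λ x) x := by
    intro x hx
    have hm := hΛmem x hx
    have hIp := hIpos _ hm
    have hΛd : HasDerivAt Λ (-I (Λ x))⁻¹ x :=
      HasDerivAt.of_local_left_inverse (hΛcont x hx) (hLd _ hm) (by linarith)
        (by filter_upwards [Ioi_mem_nhds hx] with y hy using hΛright y hy)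
    have h := (hFd _ hm).comp x hΛd
    have e : -(I (Λ x) / Λ x) * (-I (Λ x))⁻¹ = 1 / Λ x := by
      have : Λ x ≠ 0 := (hM0.trans hm).ne'
      field_simp
    rw [e] at h
    refine h.congr_of_eventuallyEq ?_
    filter_upwards [Ioi_mem_nhds hx] with y hy using hG y hy
  have hlL : Tendsto (fun l => l * L l) atTop (𝓝 A) := by
    have h := (tendsto_integral_div_zero hA.le hCM hB').const_add A
    rw [add_zero] at h
    refine h.congr' ?_
    filter_upwards [eventually_gt_atTop M] with l hl
    have i1 : IntervalIntegrable (fun θ => C θ / (l - C θ)) volume 0 A := by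
      simpa using intervalIntegrable_div 1 hA.le hCm hCm hCM hB' hl
    have e : ∫ θ in (0:ℝ)..A, (1 + C θ / (l - C θ)) = A + ∫ θ in (0:ℝ)..A, C θ / (l - C θ) := by
      rw [intervalIntegral.integral_add intervalIntegrable_const i1]
      simp
    rw [← e, hL l hl, ← intervalIntegral.integral_const_mul]
    refine intervalIntegral.integral_congr fun θ hθ => ?_
    rw [uIcc_of_le hA.le] at hθ
    have := hCM θ hθ
    have : l - C θ ≠ 0 := by linarith
    field_simp
    ring
  have hxΛ : Tendsto (fun x => Λ x * x) (𝓝[>] 0) (𝓝 A) := by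
    refine (hlL.comp hΛzero).congr' ?_
    filter_upwards [self_mem_nhdsWithin] with x hx
    simp only [Function.comp, hΛright x hx]
  have hG0 : Tendsto G (𝓝[>] 0) (𝓝 0) := by
    refine ((tendsto_integral_div_zero hA.le hCM hcB).comp hΛzero).congr' ?_
    filter_upwards [self_mem_nhdsWithin] with x hx
    simp only [Function.comp, hG x hx, hF _ (hΛmem x hx)]
  have hsq : Tendsto (fun x : ℝ => G x / x ^ 2) (𝓝[>] (0:ℝ)) (𝓝 (1 / (4 * S))) := by
    refine HasDerivAt.lhopital_zero_nhdsGT (f' := fun x => 1 / Λ x) (g' := fun x => 2 * x)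
      ?_ ?_ ?_ hG0 ?_ ?_
    · filter_upwards [self_mem_nhdsWithin] with x hx using hGd x hx
    · exact Eventually.of_forall fun x => by simpa using hasDerivAt_pow 2 x
    · filter_upwards [self_mem_nhdsWithin] with x hx
      have : 0 < x := hx
      positivity
    · have : Tendsto (fun x : ℝ => x ^ 2) (𝓝 0) (𝓝 (0 ^ 2)) := (continuous_pow 2).tendsto 0
      simpa using this.mono_left nhdsWithin_le_nhds
    · have h := (hxΛ.const_mul 2).inv₀ (by positivity)
      rw [show 1 / (4 * S) = (2 * A)⁻¹ by rw [hAdef, one_div]; ring]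
      refine h.congr fun x => ?_
      rw [div_div, one_div]
      ring
  refine ⟨?_, hsq, tendsto_div_of_deriv_tendsto hGd (tendsto_const_nhds.div hΛtop hM0.ne')⟩
  -- `G / (x G') = (G / x ^ 2) * (x Λ)`, since `G' = 1 / Λ`.
  have h := hsq.mul hxΛ
  rw [show 1 / (4 * S) * A = 1 / 2 by rw [hAdef]; field_simp; norm_num] at h
  refine h.congr' ?_
  filter_upwards [self_mem_nhdsWithin] with x hx
  have hx0 : 0 < x := hx
  have : Λ x ≠ 0 := (hM0.trans (hΛmem x hx)).ne'
  rw [(hGd x hx).deriv]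
  field_simp
end

section
/- Assume M > 0 and that C attains its maximum M at a unique point of the period interval. Let Λ : (0, +∞) → (M, +∞) be the inverse of the (strictly decreasing, surjective) function L, and set 𝓕(ℓ) = F(Λ(ℓ)) for ℓ > 0. Then the limit a₊ = lim_{λ→M⁺} ( L(λ)/λ − F(λ) ) exists in (0, +∞], it equals lim_{λ→M⁺} ∫_λ^{+∞} L(μ)/μ² dμ, and if a₊ < +∞ then lim_{ℓ→+∞} ( 𝓕(ℓ) − ℓ/M ) = −a₊, i.e. the curve (ℓ, 𝓕(ℓ)) has the asymptote y = x/M − a₊ as ℓ → +∞. -/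
/-!
Write `h l = L l / l - F l`. Everything follows from the closed form
`h l = ∫ μ in Ioi l, L μ / μ ^ 2`.

Differentiating under the integral sign, `L' = -∫ 1/(l - C)²` and `F' = -∫ c/(l - C)²`. The function
`Sg / (l - C)` is Lipschitz and periodic, so the integral of its derivative over a period vanishes;
by the Pythagorean identity that derivative is a.e. `(l c - 1)/(l - C)²`, so `L' = l F'`
(`integral_resolvent_identity`). Hence `h' = L'/l - L/l² - F' = -L/l² < 0`. Since `h → 0` at `+∞`,
the closed form holds, `h` is positive and decreasing, and its limit at `M⁺` exists in `(0, +∞]`.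

For the asymptote, with `l = Λ x`,
`G x - x/M = F l - L l / M = -h l - (l - M) L l / (l M)`, and `(l - M) L l → 0` as `l → M⁺` by
dominated convergence, because `C < M` almost everywhere when the maximum point is unique modulo the
period. Finally `Λ x → M⁺` as `x → +∞` because `L` is decreasing.
-/

open MeasureTheory Filter Set Topology

/-- Differentiation under the integral sign for the weighted resolvent integral `∫ g / (l - C)`. -/
lemma hasDerivAt_resolvent {C g : ℝ → ℝ} {M a b l : ℝ} (hC : Continuous C) (hCM : ∀ θ, C θ ≤ M)
    (hg : Measurable g) (hgb : ∃ B : ℝ, ∀ θ, |g θ| ≤ B) (hl : M < l) :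
    IntervalIntegrable (fun θ => g θ / (l - C θ) ^ 2) volume a b ∧
    HasDerivAt (fun l => ∫ θ in a..b, g θ / (l - C θ)) (-∫ θ in a..b, g θ / (l - C θ) ^ 2) l := by
  obtain ⟨B, hB⟩ := hgb
  have hB0 : 0 ≤ B := (abs_nonneg _).trans (hB 0)
  have hmeas : ∀ x, Measurable fun θ => g θ / (x - C θ) := fun x =>
    hg.div (measurable_const.sub hC.measurable)
  have hmeas2 : ∀ x, Measurable fun θ => -(g θ / (x - C θ) ^ 2) := fun x =>
    (hg.div ((measurable_const.sub hC.measurable).pow_const 2)).neg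
  -- On `x > (M + l) / 2` the denominators stay at least `(l - M) / 2`.
  have key := intervalIntegral.hasDerivAt_integral_of_dominated_loc_of_deriv_le
    (μ := volume) (a := a) (b := b)
    (F := fun x θ => g θ / (x - C θ)) (F' := fun x θ => -(g θ / (x - C θ) ^ 2)) (x₀ := l)
    (s := Ioi ((M + l) / 2)) (bound := fun _ => B / ((l - M) / 2) ^ 2)
    (Ioi_mem_nhds (by linarith))
    (Eventually.of_forall fun x => (hmeas x).aestronglyMeasurable)
    ?_ (hmeas2 l).aestronglyMeasurable ?_ intervalIntegrable_const ?_
  · obtain ⟨h1, h2⟩ := key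
    refine ⟨by simpa [Pi.neg_def] using h1.neg, ?_⟩
    simpa only [intervalIntegral.integral_neg] using h2
  · refine (intervalIntegrable_const (c := B / (l - M))).mono_fun
      (hmeas l).aestronglyMeasurable (Eventually.of_forall fun θ => ?_)
    have := hCM θ
    have h0 : 0 < l - M := by linarith
    have h1 : 0 < l - C θ := by linarith
    simp only [Real.norm_eq_abs]
    rw [abs_div, abs_of_pos h1, abs_of_nonneg (by positivity : 0 ≤ B / (l - M))]
    have := hB θ
    gcongr
  · refine Eventually.of_forall fun θ _ x hx => ?_
    have := hCM θ
    have hx' : (M + l) / 2 < x := hx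
    have h0 : 0 < l - M := by linarith
    have h1 : 0 < x - C θ := by linarith
    rw [Real.norm_eq_abs, abs_neg, abs_div, abs_of_pos (by positivity : 0 < (x - C θ) ^ 2)]
    have := hB θ
    gcongr
    linarith
  · refine Eventually.of_forall fun θ _ x hx => ?_
    have := hCM θ
    have hx' : (M + l) / 2 < x := hx
    have h1 : x - C θ ≠ 0 := by intro h; linarith
    convert! (hasDerivAt_const x (g θ)).div ((hasDerivAt_id x).sub_const (C θ)) h1 using 1
    simp
    ring

lemma tendsto_resolvent_atTop {C g : ℝ → ℝ} {M S : ℝ} (hS : 0 < S) (hCM : ∀ θ, C θ ≤ M)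
    (hgb : ∃ B : ℝ, ∀ θ, |g θ| ≤ B) :
    Tendsto (fun l => ∫ θ in (0:ℝ)..(2 * S), g θ / (l - C θ)) atTop (𝓝 0) := by
  obtain ⟨B, hB⟩ := hgb
  have hB0 : 0 ≤ B := (abs_nonneg _).trans (hB 0)
  have hlim : Tendsto (fun l : ℝ => B / (l - M) * (2 * S)) atTop (𝓝 0) := by
    simpa [← sub_eq_add_neg] using ((tendsto_id.atTop_add (tendsto_const_nhds (x := -M))).const_div_atTop B).mul_const
      (2 * S)
  refine squeeze_zero_norm' ?_ hlim
  filter_upwards [eventually_gt_atTop M] with l hl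
  have := intervalIntegral.norm_integral_le_of_norm_le_const (a := 0) (b := 2 * S)
    (f := fun θ => g θ / (l - C θ)) (C := B / (l - M)) ?_
  · simpa [abs_of_pos hS] using this
  · intro θ _
    have := hCM θ
    have h0 : 0 < l - M := by linarith
    have h1 : 0 < l - C θ := by linarith
    rw [Real.norm_eq_abs, abs_div, abs_of_pos h1]
    have := hB θ
    gcongr

/-- The identity `∫ 1/(l - C)² = l ∫ c/(l - C)²`: the difference of the two integrands is a.e.,
up to sign, the derivative of the periodic Lipschitz function `Sg / (l - C)`. -/
lemma integral_resolvent_identity {C Sg c s : ℝ → ℝ} {S M l : ℝ}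
    (hC_lip : ∃ K : NNReal, LipschitzWith K C)
    (hSg_lip : ∃ K : NNReal, LipschitzWith K Sg)
    (hC_per : Function.Periodic C (2 * S))
    (hSg_per : Function.Periodic Sg (2 * S))
    (hc_meas : Measurable c) (hc_bdd : ∃ B : ℝ, ∀ θ, |c θ| ≤ B)
    (hconv : ∀ᵐ θ ∂(volume : Measure ℝ), HasDerivAt C (-(s θ)) θ ∧ HasDerivAt Sg (c θ) θ ∧
      c θ * C θ + s θ * Sg θ = 1)
    (hCM : ∀ θ, C θ ≤ M) (hl : M < l) :
    ∫ θ in (0:ℝ)..(2 * S), 1 / (l - C θ) ^ 2 = l * ∫ θ in (0:ℝ)..(2 * S), c θ / (l - C θ) ^ 2 := by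
  obtain ⟨K, hK⟩ := hC_lip
  obtain ⟨K', hK'⟩ := hSg_lip
  have hpos : ∀ θ, 0 < l - C θ := fun θ => by linarith [hCM θ]
  have hR : LipschitzWith (K / (Real.toNNReal ((l - M) ^ 2))) (fun θ => (l - C θ)⁻¹) := by
    refine LipschitzWith.of_dist_le_mul fun x y => ?_
    have h0 : 0 < l - M := by linarith
    have h1 := hpos x
    have h2 := hpos y
    have hd := hK.dist_le_mul x y
    rw [Real.dist_eq] at hd ⊢
    have e : (l - C x)⁻¹ - (l - C y)⁻¹ = (C x - C y) / ((l - C x) * (l - C y)) := by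
      field_simp
      ring
    rw [e, abs_div, abs_of_pos (mul_pos h1 h2), NNReal.coe_div,
      Real.coe_toNNReal _ (by positivity), div_mul_eq_mul_div]
    have : (l - M) ^ 2 ≤ (l - C x) * (l - C y) := by
      rw [sq]
      have := hCM x
      have := hCM y
      gcongr
    gcongr
  have hac := hK'.lipschitzOnWith (s := uIcc 0 (2 * S)) |>.absolutelyContinuousOnInterval
  have hacR := hR.lipschitzOnWith (s := uIcc 0 (2 * S)) |>.absolutelyContinuousOnInterval
  have hftc := hac.integral_deriv_mul_eq_sub hacR
  have hC1 : C (2 * S) = C 0 := by simpa using hC_per 0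
  have hS1 : Sg (2 * S) = Sg 0 := by simpa using hSg_per 0
  rw [hC1, hS1, sub_self] at hftc
  have i1 := (hasDerivAt_resolvent (a := 0) (b := 2 * S) hK.continuous hCM
    (measurable_const (a := (1:ℝ))) ⟨1, by simp⟩ hl).1
  have i2 := (hasDerivAt_resolvent (a := 0) (b := 2 * S) hK.continuous hCM hc_meas hc_bdd hl).1
  rw [← sub_eq_zero, ← intervalIntegral.integral_const_mul,
    ← intervalIntegral.integral_sub i1 (i2.const_mul l), ← neg_eq_zero,
    ← intervalIntegral.integral_neg]
  refine (intervalIntegral.integral_congr_ae ?_).trans hftc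
  filter_upwards [hconv] with θ hθ _
  obtain ⟨h1, h2, h3⟩ := hθ
  have h4 := ((h1.const_sub l).inv (hpos θ).ne').deriv
  have hp := (hpos θ).ne'
  have h4' : deriv (fun θ => (l - C θ)⁻¹) θ = -(- -s θ) / (l - C θ) ^ 2 := h4
  rw [h2.deriv, h4']
  field_simp
  linear_combination h3

/-- If the maximum `M` of `C` is attained once per period, then `{C = M}` is null and
`(l - M) ∫ 1/(l - C) → 0` as `l → M⁺`. -/
lemma tendsto_mul_resolvent {C : ℝ → ℝ} {S M θ₁ : ℝ} (hS : 0 < S) (hC : Continuous C)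
    (hC_per : Function.Periodic C (2 * S)) (hCM : ∀ θ, C θ ≤ M)
    (hargmax : {θ | θ ∈ Set.Ico θ₁ (θ₁ + 2 * S) ∧ C θ = M} = {θ₁}) :
    Tendsto (fun l => (l - M) * ∫ θ in (0:ℝ)..(2 * S), 1 / (l - C θ)) (𝓝[>] M) (𝓝 0) := by
  have hnull : ∀ᵐ θ ∂(volume : Measure ℝ), C θ ≠ M := by
    have hsub : {θ | C θ = M} ⊆ range (fun n : ℤ => θ₁ - n • (2 * S)) := by
      intro θ hθ
      obtain ⟨n, hn, -⟩ := existsUnique_add_zsmul_mem_Ico (by positivity : 0 < 2 * S) θ θ₁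
      have hmem : θ + n • (2 * S) ∈ ({θ₁} : Set ℝ) := by
        rw [← hargmax]
        exact ⟨hn, ((hC_per.zsmul n) θ).trans hθ⟩
      refine ⟨n, ?_⟩
      rw [mem_singleton_iff] at hmem
      simp only [← hmem, add_sub_cancel_right]
    have hcount : {θ | C θ = M}.Countable := (countable_range _).mono hsub
    simpa [ae_iff] using hcount.measure_zero volume
  have key : Tendsto (fun l => ∫ θ in (0:ℝ)..(2 * S), (l - M) * (1 / (l - C θ))) (𝓝[>] M)
      (𝓝 (∫ _ in (0:ℝ)..(2 * S), (0:ℝ))) := by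
    refine intervalIntegral.tendsto_integral_filter_of_dominated_convergence (fun _ => 1)
      ?_ ?_ intervalIntegrable_const ?_
    · refine Eventually.of_forall fun l => Measurable.aestronglyMeasurable ?_
      exact (measurable_const.div (measurable_const.sub hC.measurable)).const_mul _
    · filter_upwards [self_mem_nhdsWithin] with l (hl : M < l)
      refine Eventually.of_forall fun θ _ => ?_
      have := hCM θ
      have h0 : 0 < l - M := by linarith
      have h1 : 0 < l - C θ := by linarith
      rw [Real.norm_eq_abs, abs_of_pos (by positivity), mul_one_div, div_le_one h1]
      linarith
    · filter_upwards [hnull] with θ hθ _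
      have hd : M - C θ ≠ 0 := sub_ne_zero.2 (Ne.symm hθ)
      have hc : ContinuousAt (fun l => (l - M) * (1 / (l - C θ))) M := by
        fun_prop (disch := assumption)
      have := hc.tendsto
      simp only [sub_self, zero_mul] at this
      exact this.mono_left nhdsWithin_le_nhds
  simpa only [intervalIntegral.integral_const_mul, intervalIntegral.integral_zero] using key

theorem stmt15
    (S : ℝ) (hS : 0 < S)
    (C Sg c s : ℝ → ℝ)
    (hC_lip : ∃ K : NNReal, LipschitzWith K C)
    (hSg_lip : ∃ K : NNReal, LipschitzWith K Sg)
    (hC_per : Function.Periodic C (2 * S))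
    (hSg_per : Function.Periodic Sg (2 * S))
    (hc_meas : Measurable c) (hs_meas : Measurable s)
    (hc_bdd : ∃ B : ℝ, ∀ θ, |c θ| ≤ B) (hs_bdd : ∃ B : ℝ, ∀ θ, |s θ| ≤ B)
    (hconv : ∀ᵐ θ ∂(volume : Measure ℝ), HasDerivAt C (-(s θ)) θ ∧ HasDerivAt Sg (c θ) θ ∧
      c θ * C θ + s θ * Sg θ = 1)
    (M : ℝ) (hM : IsGreatest (C '' Set.Icc 0 (2 * S)) M)
    (L F : ℝ → ℝ)
    (hL : ∀ l : ℝ, M < l → L l = ∫ θ in (0:ℝ)..(2*S), 1 / (l - C θ))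
    (hF : ∀ l : ℝ, M < l → F l = ∫ θ in (0:ℝ)..(2*S), c θ / (l - C θ))
    (θ₁ : ℝ) (hargmax : {θ | θ ∈ Set.Ico θ₁ (θ₁ + 2 * S) ∧ C θ = M} = {θ₁})
    (hM0 : 0 < M)
    (Λ : ℝ → ℝ)
    (hΛmem : ∀ x : ℝ, 0 < x → M < Λ x)
    (hΛright : ∀ x : ℝ, 0 < x → L (Λ x) = x)
    (hΛleft : ∀ l : ℝ, M < l → Λ (L l) = l)
    (G : ℝ → ℝ) (hG : ∀ x : ℝ, 0 < x → G x = F (Λ x)) :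
    ∃ a : EReal, 0 < a ∧
      Tendsto (fun l : ℝ => ((L l / l - F l : ℝ) : EReal)) (𝓝[>] M) (𝓝 a) ∧
      Tendsto (fun l : ℝ => ((∫ μ in Set.Ioi l, L μ / μ ^ 2 : ℝ) : EReal))
        (𝓝[>] M) (𝓝 a) ∧
      ∀ r : ℝ, a = (r : EReal) →
        Tendsto (fun x : ℝ => G x - x / M) atTop (𝓝 (-r)) := by
  obtain ⟨K, hK⟩ := id hC_lip
  have hCc := hK.continuous
  have hCM : ∀ θ, C θ ≤ M := fun θ => by
    obtain ⟨y, hy, hxy⟩ := hC_per.exists_mem_Ico₀ (by positivity) θ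
    rw [hxy]
    exact hM.2 ⟨y, Ico_subset_Icc_self hy, rfl⟩
  have hone : ∃ B : ℝ, ∀ θ : ℝ, |(fun _ : ℝ => (1:ℝ)) θ| ≤ B := ⟨1, by simp⟩
  have hLd : ∀ l, M < l → HasDerivAt L (-∫ θ in (0:ℝ)..(2*S), 1 / (l - C θ) ^ 2) l := by
    intro l hl
    refine (hasDerivAt_resolvent (a := 0) (b := 2 * S) hCc hCM measurable_const
      hone hl).2.congr_of_eventuallyEq ?_
    filter_upwards [Ioi_mem_nhds hl] with x hx using hL x hx
  have hFd : ∀ l, M < l → HasDerivAt F (-∫ θ in (0:ℝ)..(2*S), c θ / (l - C θ) ^ 2) l := by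
    intro l hl
    refine (hasDerivAt_resolvent (a := 0) (b := 2 * S) hCc hCM hc_meas
      hc_bdd hl).2.congr_of_eventuallyEq ?_
    filter_upwards [Ioi_mem_nhds hl] with x hx using hF x hx
  have hLpos : ∀ l, M < l → 0 < L l := by
    intro l hl
    have hp : ∀ θ, 0 < l - C θ := fun θ => by linarith [hCM θ]
    rw [hL l hl]
    refine intervalIntegral.intervalIntegral_pos_of_pos ?_ (fun θ => one_div_pos.2 (hp θ))
      (by positivity)
    exact (continuous_const.div (continuous_const.sub hCc) fun θ => (hp θ).ne').intervalIntegrable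
      _ _
  have hLanti : AntitoneOn L (Ioi M) := by
    refine antitoneOn_of_deriv_nonpos (convex_Ioi M)
      (fun l hl => (hLd l hl).continuousAt.continuousWithinAt)
      (fun l hl => (hLd l (interior_subset hl)).differentiableAt.differentiableWithinAt)
      fun l hl => ?_
    rw [(hLd l (interior_subset hl)).deriv, neg_nonpos]
    exact intervalIntegral.integral_nonneg (by positivity) fun θ _ => by positivity
  set h : ℝ → ℝ := fun l => L l / l - F l with hh
  have hhd : ∀ l, M < l → HasDerivAt h (-(L l / l ^ 2)) l := by
    intro l hl
    have hl0 : l ≠ 0 := (hM0.trans hl).ne'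
    have hid := integral_resolvent_identity hC_lip hSg_lip hC_per hSg_per hc_meas hc_bdd hconv
      hCM hl
    convert! ((hLd l hl).div (hasDerivAt_id l) hl0).sub (hFd l hl) using 1
    rw [hid]
    simp only [id]
    field_simp
    ring
  have hLneg : ∀ l, M < l → -(L l / l ^ 2) < 0 := fun l hl => by
    have := hLpos l hl
    have := hM0.trans hl
    rw [neg_lt_zero]
    positivity
  have hh0 : Tendsto h atTop (𝓝 0) := by
    have t1 : Tendsto L atTop (𝓝 0) := by
      refine (tendsto_resolvent_atTop hS hCM hone).congr' ?_
      filter_upwards [eventually_gt_atTop M] with l hl using (hL l hl).symm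
    have t2 : Tendsto F atTop (𝓝 0) := by
      refine (tendsto_resolvent_atTop hS hCM hc_bdd).congr' ?_
      filter_upwards [eventually_gt_atTop M] with l hl using (hF l hl).symm
    simpa using (t1.div_atTop tendsto_id).sub t2
  have hint : ∀ l, M < l → ∫ μ in Ioi l, L μ / μ ^ 2 = h l := by
    intro l hl
    have := integral_Ioi_of_hasDerivAt_of_nonpos' (a := l)
      (fun x hx => hhd x (hl.trans_le hx)) (fun x hx => (hLneg x (hl.trans hx)).le) hh0
    rw [integral_neg] at this
    linarith
  have hhanti : StrictAntiOn h (Ioi M) := by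
    refine strictAntiOn_of_deriv_neg (convex_Ioi M)
      (fun l hl => (hhd l hl).continuousAt.continuousWithinAt) fun l hl => ?_
    rw [(hhd l (interior_subset hl)).deriv]
    exact hLneg l (interior_subset hl)
  have hhpos : ∀ l, M < l → 0 < h l := by
    intro l hl
    have hl1 : M < l + 1 := by linarith
    have hnn : 0 ≤ h (l + 1) := by
      rw [← hint _ hl1]
      exact setIntegral_nonneg measurableSet_Ioi fun x hx =>
        (neg_lt_zero.1 (hLneg x (hl1.trans hx))).le
    exact hnn.trans_lt (hhanti hl hl1 (by linarith))
  -- In `EReal` the decreasing function `h` always has a limit at `M⁺`, namely its supremum.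
  have hanti : AntitoneOn (fun l => (h l : EReal)) (Ioi M) := fun x hx y hy hxy =>
    EReal.coe_le_coe_iff.2 (hhanti.antitoneOn hx hy hxy)
  have hlim := hanti.tendsto_nhdsGT (OrderTop.bddAbove _)
  refine ⟨_, ?_, hlim, ?_, ?_⟩
  · have hM1 : M < M + 1 := by linarith
    exact (EReal.coe_pos.2 (hhpos _ hM1)).trans_le (le_sSup ⟨M + 1, hM1, rfl⟩)
  · refine hlim.congr' ?_
    filter_upwards [self_mem_nhdsWithin] with l hl
    rw [hint l hl]
  · intro r hr
    rw [hr] at hlim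
    have hlim' : Tendsto h (𝓝[>] M) (𝓝 r) := by
      simpa only [EReal.tendsto_coe] using hlim
    have hΛ : Tendsto Λ atTop (𝓝[>] M) := by
      refine tendsto_nhdsWithin_iff.2 ⟨?_, ?_⟩
      · refine tendsto_order.2 ⟨fun a ha => ?_, fun a ha => ?_⟩
        · filter_upwards [eventually_gt_atTop 0] with x hx using ha.trans (hΛmem x hx)
        · filter_upwards [eventually_gt_atTop 0, eventually_gt_atTop (L a)] with x hx hxa
          by_contra! hcon
          have := hLanti ha (hΛmem x hx) hcon
          rw [hΛright x hx] at this
          linarith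
      · filter_upwards [eventually_gt_atTop 0] with x hx using hΛmem x hx
    have hmul := tendsto_mul_resolvent hS hCc hC_per hCM hargmax
    have hinv : Tendsto (fun l : ℝ => (l * M)⁻¹) (𝓝[>] M) (𝓝 (M * M)⁻¹) := by
      have : ContinuousAt (fun l : ℝ => (l * M)⁻¹) M :=
        (continuousAt_id.mul continuousAt_const).inv₀ (by simp [hM0.ne'])
      exact this.tendsto.mono_left nhdsWithin_le_nhds
    have hcomb := (hlim'.neg.sub (hmul.mul hinv)).comp hΛ
    rw [zero_mul, sub_zero] at hcomb
    refine hcomb.congr' ?_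
    filter_upwards [eventually_gt_atTop 0] with x hx
    have hx1 := hΛmem x hx
    have hx0 : Λ x ≠ 0 := (hM0.trans hx1).ne'
    have hM0' := hM0.ne'
    simp only [Function.comp, hh]
    rw [← hL _ hx1, hΛright x hx, hG x hx]
    field_simp
    ring
end
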